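/- For every viscosity ν ≥ 0, every dissipation exponent γ ∈ (0, 3/2), and every α with 1/2 ≤ α < 1/2 + min(1/6, 3/2 − γ), there exist infinitely many nontrivial (not identically zero) stationary weak solutions θ of the surface quasi-geostrophic equation on 𝕋² with zero mean and with Λ^{−1}θ ∈ C^α(𝕋²). -/

import Mathlib

open MeasureTheory Complex Filter
open scoped ENNReal NNReal

noncomputable section

abbrev Z2 := ℤ × ℤ

/-- dot product of an integer frequency with a point of `ℝ²` -/
def dotZ (k : Z2) (x : ℝ × ℝ) : ℝ := (k.1 : ℝ) * x.1 + (k.2 : ℝ) * x.2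

/-- Euclidean norm of an integer frequency -/
def knorm (k : Z2) : ℝ := Real.sqrt ((k.1 : ℝ) ^ 2 + (k.2 : ℝ) ^ 2)

/-- Euclidean norm on `ℝ²` (realized as `ℝ × ℝ`) -/
def e2 (x : ℝ × ℝ) : ℝ := Real.sqrt (x.1 ^ 2 + x.2 ^ 2)

/-- the fundamental domain `[-π, π]²` of the torus -/
def Q2 : Set (ℝ × ℝ) := Set.Icc (-Real.pi, -Real.pi) (Real.pi, Real.pi)

/-- `2π`-periodicity in both variables -/
def Periodic2 (f : ℝ × ℝ → ℂ) : Prop :=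
  ∀ x : ℝ × ℝ, f (x.1 + 2 * Real.pi, x.2) = f x ∧ f (x.1, x.2 + 2 * Real.pi) = f x

def RealValued (f : ℝ × ℝ → ℂ) : Prop := ∀ x, (f x).im = 0

/-- Fourier coefficient `f̂(k) = (2π)⁻² ∫_{𝕋²} f(x) e^{-ik⋅x} dx` -/
def fCoeff (f : ℝ × ℝ → ℂ) (k : Z2) : ℂ :=
  (1 / (2 * Real.pi) ^ 2 : ℂ) * ∫ x in Q2, f x * Complex.exp (-Complex.I * (dotZ k x : ℝ))

/-- Fourier multiplier operator with symbol `m` -/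
def Tmult (m : Z2 → ℂ) (f : ℝ × ℝ → ℂ) : ℝ × ℝ → ℂ :=
  fun x => ∑' k : Z2, m k * fCoeff f k * Complex.exp (Complex.I * (dotZ k x : ℝ))

/-- `Λ^s = (-Δ)^{s/2}`, the multiplier with symbol `|k|^s` (killing `k = 0` for `s ≤ 0`) -/
def Lam (s : ℝ) : (ℝ × ℝ → ℂ) → (ℝ × ℝ → ℂ) :=
  Tmult fun k => if k = 0 then 0 else ((knorm k ^ s : ℝ) : ℂ)

/-- symbol of the Riesz transform `R_j`, `i k_j / |k|` -/
def rieszSym (j : Fin 2) (k : Z2) : ℂ :=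
  if k = 0 then 0
  else Complex.I * ((if j = 0 then (k.1 : ℝ) else (k.2 : ℝ)) : ℂ) / ((knorm k : ℝ) : ℂ)

/-- the Riesz transform `R_j` -/
def Riesz (j : Fin 2) : (ℝ × ℝ → ℂ) → (ℝ × ℝ → ℂ) := Tmult (rieszSym j)

/-- symbol of the modified Riesz-type transforms `R_j^o` of Lemma 2.2 -/
def RoSym (j : Fin 2) (k : Z2) : ℝ :=
  if k = 0 then 0
  else if j = 0 then 25 * ((k.2 : ℝ) ^ 2 - (k.1 : ℝ) ^ 2) / (12 * ((k.1 : ℝ) ^ 2 + (k.2 : ℝ) ^ 2))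
  else 7 * ((k.2 : ℝ) ^ 2 - (k.1 : ℝ) ^ 2) / (12 * ((k.1 : ℝ) ^ 2 + (k.2 : ℝ) ^ 2))
      + 4 * (k.1 : ℝ) * (k.2 : ℝ) / ((k.1 : ℝ) ^ 2 + (k.2 : ℝ) ^ 2)

/-- the Riesz-type transforms `R_j^o` -/
def Ro (j : Fin 2) : (ℝ × ℝ → ℂ) → (ℝ × ℝ → ℂ) := Tmult fun k => ((RoSym j k : ℝ) : ℂ)

/-- symbol of `Δ⁻¹` (mean annihilated) -/
def deltaInvSym (k : Z2) : ℂ := if k = 0 then 0 else -1 / ((knorm k ^ 2 : ℝ) : ℂ)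

/-- directional derivative `(v ⋅ ∇) f` -/
def dirD (v : ℝ × ℝ) (f : ℝ × ℝ → ℂ) : ℝ × ℝ → ℂ := fun x => fderiv ℝ f x v

/-- partial derivative `∂_j f` -/
def pd (j : Fin 2) (f : ℝ × ℝ → ℂ) : ℝ × ℝ → ℂ :=
  dirD (if j = 0 then ((1 : ℝ), (0 : ℝ)) else ((0 : ℝ), (1 : ℝ))) f

/-- sup norm on the torus -/
def supNorm (f : ℝ × ℝ → ℂ) : ℝ := ⨆ x : ℝ × ℝ, ‖f x‖

/-- the `X`-norm `‖q‖_X = ‖q‖_∞ + ‖R₁^o q‖_∞ + ‖R₂^o q‖_∞` -/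
def Xnorm (q : ℝ × ℝ → ℂ) : ℝ := supNorm q + supNorm (Ro 0 q) + supNorm (Ro 1 q)

/-- the vectors `l₁ = (3/5, 4/5)` and `l₂ = (1,0)` -/
def l1 : ℝ × ℝ := (3 / 5, 4 / 5)
def l2 : ℝ × ℝ := (1, 0)

/-- the rotation `l ↦ l^⊥` -/
def perp (l : ℝ × ℝ) : ℝ × ℝ := (-l.2, l.1)

/-- symbol view of frequencies as real vectors -/
def toR (k : Z2) : ℝ × ℝ := ((k.1 : ℝ), (k.2 : ℝ))

/-- the operator `T^{(1)}_{λl}` (where `κ = λl ∈ ℤ²`) -/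
def T1op (κ : Z2) (lam : ℝ) : (ℝ × ℝ → ℂ) → (ℝ × ℝ → ℂ) :=
  Tmult fun k => (((knorm (κ + k) + knorm (κ - k)) / 2 - lam : ℝ) : ℂ)

/-- the operator `T^{(2)}_{λl}` (where `κ = λl ∈ ℤ²`) -/
def T2op (κ : Z2) (l : ℝ × ℝ) : (ℝ × ℝ → ℂ) → (ℝ × ℝ → ℂ) :=
  Tmult fun k =>
    Complex.I * (((knorm (κ + k) - knorm (κ - k)) / 2 - (l.1 * (k.1 : ℝ) + l.2 * (k.2 : ℝ)) : ℝ) : ℂ)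

/-- the functions `a_j = 2 √(r/den) √(C₀ + R_j^o q / r)` -/
def aPerf (q : ℝ × ℝ → ℂ) (r den C₀ : ℝ) (j : Fin 2) : ℝ × ℝ → ℂ :=
  fun x => ((2 * Real.sqrt (r / den) * Real.sqrt (C₀ + (Ro j q x).re / r) : ℝ) : ℂ)

/-- `λ_n = ⌈λ₀^{bⁿ}⌉` -/
def lamSeq (lam0 : ℕ) (b : ℝ) (n : ℕ) : ℕ := ⌈((lam0 : ℝ)) ^ (b ^ n)⌉₊

/-- `r_n = λ_n^{-β}` -/
def rSeq (lam0 : ℕ) (b β : ℝ) (n : ℕ) : ℝ := ((lamSeq lam0 b n : ℝ)) ^ (-β)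

/-- `μ_{n+1} = (λ_n λ_{n+1})^{1/2}` -/
def muSeq (lam0 : ℕ) (b : ℝ) (n : ℕ) : ℝ :=
  Real.sqrt ((lamSeq lam0 b n : ℝ) * (lamSeq lam0 b (n + 1) : ℝ))

/-- smooth Fourier cutoff `P_{≤μ}` associated to a bump `ψ` -/
def Pcut (ψ : ℝ × ℝ → ℝ) (μ : ℝ) : (ℝ × ℝ → ℂ) → (ℝ × ℝ → ℂ) :=
  Tmult fun k => ((ψ ((k.1 : ℝ) / μ, (k.2 : ℝ) / μ) : ℝ) : ℂ)

/-- bilinear multiplier with symbol the Fourier transform of a kernel `K ∈ L¹(ℝ²×ℝ²)` -/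
def mOf (K : (ℝ × ℝ) × (ℝ × ℝ) → ℂ) (ξ η : ℝ × ℝ) : ℂ :=
  ∫ z : (ℝ × ℝ) × (ℝ × ℝ),
    K z * Complex.exp (-Complex.I * ((ξ.1 * z.1.1 + ξ.2 * z.1.2 + η.1 * z.2.1 + η.2 * z.2.2 : ℝ) : ℂ))

/-- the bilinear multiplier operator associated to a kernel `K ∈ L¹(ℝ²×ℝ²)` -/
def Tbil (K : (ℝ × ℝ) × (ℝ × ℝ) → ℂ) (f g : ℝ × ℝ → ℂ) : ℝ × ℝ → ℂ :=
  fun x => ∑' k : Z2,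
    (∑' k' : Z2, mOf K (toR k') (toR (k - k')) * fCoeff f k' * fCoeff g (k - k'))
      * Complex.exp (Complex.I * (dotZ k x : ℝ))

/-- Fourier coefficients of the commutator `[R_j, φ]θ`, computed from those of `φ` and `θ` -/
def commCoeff (j : Fin 2) (φh c : Z2 → ℂ) (k : Z2) : ℂ :=
  ∑' k' : Z2, (rieszSym j k - rieszSym j k') * φh (k - k') * c k'


/-- A mean-zero `θ ∈ Ḣ^{-1/2}(𝕋²)`, given through its Fourier coefficients `c`, is a
stationary weak solution of SQG when, for every real `ψ ∈ C^∞(𝕋²)`,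
`(1/2)∫ (Λ^{-1/2}θ)·Λ^{1/2}([R^⊥,∇ψ]θ) = −ν ∫ (Λ^{-1/2}θ) Λ^{γ+1/2}ψ`; both sides are
expressed through Fourier coefficients via Parseval, with
`[R^⊥,∇ψ]θ = −[R₂,∂₁ψ]θ + [R₁,∂₂ψ]θ`. -/
def IsStatWeakSol (ν γ : ℝ) (c : Z2 → ℂ) : Prop :=
  ∀ ψ : ℝ × ℝ → ℂ, ContDiff ℝ (⊤ : ℕ∞) ψ → Periodic2 ψ → RealValued ψ →
    (1 / 2 : ℂ) * ((2 * Real.pi) ^ 2 : ℝ) *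
      (∑' k : Z2, ((knorm k ^ (-(1 / 2) : ℝ) : ℝ) : ℂ) * c k *
        (starRingEnd ℂ) (((knorm k ^ ((1 / 2) : ℝ) : ℝ) : ℂ) *
          (-(commCoeff 1 (fun m => Complex.I * ((m.1 : ℝ) : ℂ) * fCoeff ψ m) c k)
            + commCoeff 0 (fun m => Complex.I * ((m.2 : ℝ) : ℂ) * fCoeff ψ m) c k)))
    = -(ν : ℂ) * ((2 * Real.pi) ^ 2 : ℝ) *
      (∑' k : Z2, ((knorm k ^ (-(1 / 2) : ℝ) : ℝ) : ℂ) * c k *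
        (starRingEnd ℂ) (((knorm k ^ (γ + 1 / 2) : ℝ) : ℂ) * fCoeff ψ k))

/-! ### Plane geometry of frequencies -/

def cross (k m : Z2) : ℝ := (k.1 : ℝ) * m.2 - (k.2 : ℝ) * m.1
def dotp (k m : Z2) : ℝ := (k.1 : ℝ) * m.1 + (k.2 : ℝ) * m.2

lemma knorm_eq (k : Z2) : knorm k = ‖((k.1 : ℝ) : ℂ) + ((k.2 : ℝ) : ℂ) * Complex.I‖ := by
  rw [Complex.norm_add_mul_I]; rfl

lemma knorm_nonneg (k : Z2) : 0 ≤ knorm k := Real.sqrt_nonneg _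

lemma knorm_sq (k : Z2) : knorm k ^ 2 = (k.1 : ℝ) ^ 2 + (k.2 : ℝ) ^ 2 :=
  Real.sq_sqrt (by positivity)

@[simp] lemma knorm_zero : knorm (0 : Z2) = 0 := by simp [knorm]

@[simp] lemma knorm_neg (k : Z2) : knorm (-k) = knorm k := by simp [knorm]

lemma knorm_add_le (k m : Z2) : knorm (k + m) ≤ knorm k + knorm m := by
  rw [knorm_eq, knorm_eq, knorm_eq]
  refine le_trans (le_of_eq ?_) (norm_add_le _ _)
  congr 1
  push_cast [Prod.fst_add, Prod.snd_add]
  ring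

lemma knorm_sub_le (k m : Z2) : knorm (k - m) ≤ knorm k + knorm m := by
  rw [sub_eq_add_neg]; simpa using knorm_add_le k (-m)

lemma abs_knorm_sub_le (k m : Z2) : |knorm k - knorm m| ≤ knorm (k + m) := by
  have h1 := knorm_sub_le (k + m) m
  have h2 := knorm_sub_le (k + m) k
  simp only [add_sub_cancel_right, add_sub_cancel_left] at h1 h2
  rw [abs_le]; constructor <;> linarith

lemma one_le_knorm {k : Z2} (hk : k ≠ 0) : 1 ≤ knorm k := by
  have : (1 : ℤ) ≤ k.1 ^ 2 + k.2 ^ 2 := by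
    by_contra h
    have h1 : k.1 ^ 2 = 0 := by nlinarith [sq_nonneg k.1, sq_nonneg k.2]
    have h2 : k.2 ^ 2 = 0 := by nlinarith [sq_nonneg k.1, sq_nonneg k.2]
    apply hk
    ext
    · simpa using h1
    · simpa using h2
  have h' : (1 : ℝ) ≤ (k.1 : ℝ) ^ 2 + (k.2 : ℝ) ^ 2 := by exact_mod_cast this
  unfold knorm
  rw [Real.one_le_sqrt]; exact h'

lemma knorm_pos {k : Z2} (hk : k ≠ 0) : 0 < knorm k := lt_of_lt_of_le one_pos (one_le_knorm hk)

lemma abs_cross_le (k m : Z2) : |cross k m| ≤ knorm k * knorm m := by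
  apply abs_le_of_sq_le_sq _ (mul_nonneg (knorm_nonneg _) (knorm_nonneg _))
  rw [mul_pow, knorm_sq, knorm_sq]; unfold cross
  nlinarith [sq_nonneg ((k.1 : ℝ) * m.1 + (k.2 : ℝ) * m.2)]

lemma abs_dotp_le (k m : Z2) : |dotp k m| ≤ knorm k * knorm m := by
  apply abs_le_of_sq_le_sq _ (mul_nonneg (knorm_nonneg _) (knorm_nonneg _))
  rw [mul_pow, knorm_sq, knorm_sq]; unfold dotp
  nlinarith [sq_nonneg ((k.1 : ℝ) * m.2 - (k.2 : ℝ) * m.1)]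

lemma cross_add_right (k m : Z2) : cross k (k + m) = cross k m := by
  unfold cross; push_cast [Prod.fst_add, Prod.snd_add]; ring

lemma cross_add_left' (k m : Z2) : cross (k + m) m = cross k m := by
  unfold cross; push_cast [Prod.fst_add, Prod.snd_add]; ring

lemma abs_cross_le_left (k m : Z2) : |cross k m| ≤ knorm k * knorm (k + m) := by
  rw [← cross_add_right]; exact abs_cross_le _ _

lemma abs_cross_le_right (k m : Z2) : |cross k m| ≤ knorm m * knorm (k + m) := by
  rw [← cross_add_left', mul_comm]; exact abs_cross_le _ _

/-- symbol of the quadratic form (divided by `|k+m|²`) -/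
def Qs (k m : Z2) : ℝ := (1 / 2) * (cross k m * (knorm k - knorm m)) / knorm (k + m) ^ 2

lemma Qs_comm (k m : Z2) : Qs k m = Qs m k := by
  unfold Qs; rw [add_comm m k]; unfold cross; ring

lemma Qs_neg (k m : Z2) : Qs (-k) (-m) = Qs k m := by
  have h : -k + -m = -(k + m) := by abel
  unfold Qs cross
  rw [h]
  simp only [knorm_neg, Prod.fst_neg, Prod.snd_neg]
  push_cast
  ring

lemma Qs_zero (k m : Z2) (h : k + m = 0) : Qs k m = 0 := by
  unfold Qs; rw [h]; simp

lemma abs_Qs_le_left (k m : Z2) : |Qs k m| ≤ knorm k / 2 := by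
  by_cases h : k + m = 0
  · rw [Qs_zero _ _ h]; have := knorm_nonneg k; simp; linarith
  have hp := knorm_pos h
  unfold Qs
  rw [abs_div, abs_of_nonneg (sq_nonneg (knorm (k + m))), div_le_iff₀ (by positivity), abs_mul, abs_mul]
  have h1 := abs_cross_le_left k m
  have h2 := abs_knorm_sub_le k m
  have : |cross k m| * |knorm k - knorm m| ≤ (knorm k * knorm (k + m)) * knorm (k + m) :=
    mul_le_mul h1 h2 (abs_nonneg _) (mul_nonneg (knorm_nonneg _) hp.le)
  rw [abs_of_pos (by norm_num : (0 : ℝ) < 1 / 2)]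
  nlinarith

lemma abs_Qs_le_right (k m : Z2) : |Qs k m| ≤ knorm m / 2 := by
  rw [Qs_comm]; exact abs_Qs_le_left m k

lemma abs_Qs_le_sqrt (k m : Z2) : |Qs k m| ≤ Real.sqrt (knorm k) * Real.sqrt (knorm m) := by
  rw [← Real.sqrt_mul (knorm_nonneg k)]
  apply Real.le_sqrt_of_sq_le
  have h1 := abs_Qs_le_left k m
  have h2 := abs_Qs_le_right k m
  have := mul_le_mul h1 h2 (abs_nonneg _) (by have := knorm_nonneg k; positivity)
  have := mul_nonneg (knorm_nonneg k) (knorm_nonneg m)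
  nlinarith

/-- high-high-high interactions -/
lemma abs_Qs_le_high (k m : Z2) (lam mu : ℝ) (h1 : |knorm k - lam| ≤ mu) (h2 : |knorm m - lam| ≤ mu)
    (hmu : mu ≤ lam) (hl : 0 < lam) (h3 : lam / 2 ≤ knorm (k + m)) : |Qs k m| ≤ 4 * mu := by
  have hp : 0 < knorm (k + m) := by linarith
  have hmu0 : 0 ≤ mu := le_trans (abs_nonneg _) h1
  unfold Qs
  rw [abs_div, abs_of_nonneg (sq_nonneg (knorm (k + m))), div_le_iff₀ (by positivity), abs_mul, abs_mul,
    abs_of_pos (by norm_num : (0 : ℝ) < 1 / 2)]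
  have e1 := abs_cross_le_left k m
  have e2 : |knorm k - knorm m| ≤ 2 * mu := by
    rw [abs_le] at *; constructor <;> linarith
  have e3 : knorm k ≤ 2 * lam := by rw [abs_le] at h1; linarith
  have e4 : |cross k m| ≤ 4 * knorm (k + m) * knorm (k + m) :=
    e1.trans (mul_le_mul_of_nonneg_right (by linarith) hp.le)
  have := mul_le_mul e4 e2 (abs_nonneg _) (by positivity)
  nlinarith

/-- directional symbol `(l×m)(l⋅m)/|m|²` for `l = κ/|κ|` -/
def sg (κ m : Z2) : ℝ := cross κ m * dotp κ m / (knorm κ ^ 2 * knorm m ^ 2)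

lemma abs_sg_le (κ m : Z2) : |sg κ m| ≤ 1 := by
  unfold sg
  rw [abs_div, abs_mul]
  apply div_le_one_of_le₀ _ (abs_nonneg _)
  rw [abs_of_nonneg (by positivity : 0 ≤ knorm κ ^ 2 * knorm m ^ 2)]
  have := mul_le_mul (abs_cross_le κ m) (abs_dotp_le κ m) (abs_nonneg _)
    (mul_nonneg (knorm_nonneg _) (knorm_nonneg _))
  nlinarith

lemma sg_neg (κ m : Z2) : sg (-κ) m = sg κ m := by
  unfold sg cross dotp; simp; ring

lemma sg_neg' (κ m : Z2) : sg κ (-m) = sg κ m := by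
  unfold sg cross dotp; simp; ring

/-- low frequency output of a high-high interaction -/
lemma Qs_low (κ p p' : Z2) (mu : ℝ) (h1 : knorm p ≤ mu) (h2 : knorm p' ≤ mu)
    (hmu : 2 * mu ≤ knorm κ) (hκ : κ ≠ 0) :
    |Qs (κ + p) (-κ + p') - knorm κ / 2 * sg κ (p + p')| ≤ 3 * mu := by
  have hmu0 : 0 ≤ mu := le_trans (knorm_nonneg _) h1
  have hsum : (κ + p) + (-κ + p') = p + p' := by abel
  by_cases hm : p + p' = 0
  · rw [Qs_zero _ _ (hsum.trans hm), hm]; simp [sg]; exact hmu0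
  set m := p + p' with hmdef
  set k := κ + p with hk
  set k' := -κ + p' with hk'
  have hmp := knorm_pos hm
  have hl := knorm_pos hκ
  have c1 : cross k k' = cross κ m + cross p m := by
    simp only [hk, hk', hmdef]; unfold cross
    push_cast [Prod.fst_add, Prod.snd_add, Prod.fst_neg, Prod.snd_neg]; ring
  -- norms
  have n1 : |knorm k - knorm κ| ≤ mu := by
    have a1 := knorm_add_le κ p
    have a2 := knorm_sub_le (κ + p) p
    rw [add_sub_cancel_right] at a2
    rw [abs_le]; constructor <;> linarith
  have n2 : |knorm k' - knorm κ| ≤ mu := by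
    have a1 := knorm_add_le (-κ) p'
    have a2 := knorm_sub_le (-κ + p') p'
    rw [add_sub_cancel_right] at a2
    rw [knorm_neg] at a1 a2
    rw [abs_le]; constructor <;> linarith
  have n1' := abs_le.1 n1
  have n2' := abs_le.1 n2
  have hs : knorm κ ≤ knorm k + knorm k' := by linarith
  have hs0 : 0 < knorm k + knorm k' := by linarith
  have d1 : (knorm k - knorm k') * (knorm k + knorm k') = 2 * dotp κ m + dotp (p - p') m := by
    have : (knorm k - knorm k') * (knorm k + knorm k') = knorm k ^ 2 - knorm k' ^ 2 := by ring
    rw [this, knorm_sq, knorm_sq]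
    simp only [hk, hk', hmdef]; unfold dotp
    push_cast [Prod.fst_add, Prod.snd_add, Prod.fst_neg, Prod.snd_neg, Prod.fst_sub, Prod.snd_sub]; ring
  have d2 : |(knorm k - knorm k') * knorm κ - dotp κ m| ≤ 4 * mu * knorm m := by
    have e : ((knorm k - knorm k') * knorm κ - dotp κ m) * (knorm k + knorm k')
        = dotp (p - p') m * knorm κ + dotp κ m * (2 * knorm κ - (knorm k + knorm k')) := by
      linear_combination knorm κ * d1
    have b1 : |dotp (p - p') m * knorm κ| ≤ 2 * mu * knorm m * knorm κ := by
      rw [abs_mul, abs_of_pos hl]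
      have : knorm (p - p') ≤ 2 * mu := by have := knorm_sub_le p p'; linarith
      have := (abs_dotp_le (p - p') m).trans (mul_le_mul_of_nonneg_right this hmp.le)
      gcongr
    have b2 : |dotp κ m * (2 * knorm κ - (knorm k + knorm k'))| ≤ knorm κ * knorm m * (2 * mu) := by
      rw [abs_mul]
      have := abs_dotp_le κ m
      have : |2 * knorm κ - (knorm k + knorm k')| ≤ 2 * mu := by
        rw [abs_le]; constructor <;> linarith
      gcongr
    have b3 := (abs_add_le _ _).trans (add_le_add b1 b2)
    rw [← e, abs_mul, abs_of_pos hs0] at b3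
    by_contra hcon
    push Not at hcon
    have := mul_lt_mul_of_pos_right hcon hs0
    have : 4 * mu * knorm m * knorm κ ≤ 4 * mu * knorm m * (knorm k + knorm k') := by gcongr
    nlinarith
  have d3 : |knorm k - knorm k'| ≤ knorm m := by
    have := abs_knorm_sub_le k k'; rwa [hsum] at this
  have key : Qs k k' - knorm κ / 2 * sg κ m
      = (1 / 2) * (cross p m * (knorm k - knorm k')
        + cross κ m / knorm κ * ((knorm k - knorm k') * knorm κ - dotp κ m)) / knorm m ^ 2 := by
    unfold Qs sg; rw [hsum, c1]
    field_simp
    ring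
  rw [key, abs_div, abs_of_nonneg (sq_nonneg (knorm m)), div_le_iff₀ (by positivity), abs_mul,
    abs_of_pos (by norm_num : (0 : ℝ) < 1 / 2)]
  have f1 : |cross p m * (knorm k - knorm k')| ≤ mu * knorm m * knorm m := by
    rw [abs_mul]
    have := (abs_cross_le p m).trans (mul_le_mul_of_nonneg_right h1 hmp.le)
    gcongr
  have f2 : |cross κ m / knorm κ * ((knorm k - knorm k') * knorm κ - dotp κ m)|
      ≤ knorm m * (4 * mu * knorm m) := by
    rw [abs_mul]
    have : |cross κ m / knorm κ| ≤ knorm m := by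
      rw [abs_div, abs_of_pos hl, div_le_iff₀ hl, mul_comm]; exact abs_cross_le κ m
    gcongr
  have f3 := (abs_add_le _ _).trans (add_le_add f1 f2)
  nlinarith [mul_nonneg hmu0 (sq_nonneg (knorm m))]

/-! ### Finitely supported (real, even) Fourier series, with weighted `ℓ¹` norms -/

abbrev TP := Z2 →₀ ℝ

def WN (u : Z2 → ℝ) (f : TP) : ℝ := f.sum fun k a => u k * |a|

def NN (f : TP) : ℝ := WN (fun _ => 1) f

lemma WN_eq (u : Z2 → ℝ) (f : TP) (s : Finset Z2) (hs : f.support ⊆ s) :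
    WN u f = ∑ k ∈ s, u k * |f k| :=
  Finsupp.sum_of_support_subset f hs _ (by simp)

lemma WN_add_le (u : Z2 → ℝ) (hu : ∀ k, 0 ≤ u k) (f g : TP) : WN u (f + g) ≤ WN u f + WN u g := by
  classical
  rw [WN_eq u (f + g) (f.support ∪ g.support) Finsupp.support_add,
    WN_eq u f (f.support ∪ g.support) Finset.subset_union_left,
    WN_eq u g (f.support ∪ g.support) Finset.subset_union_right, ← Finset.sum_add_distrib]
  refine Finset.sum_le_sum fun k _ => ?_
  rw [← mul_add]
  exact mul_le_mul_of_nonneg_left (abs_add_le _ _) (hu k)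

@[simp] lemma WN_zero (u : Z2 → ℝ) : WN u 0 = 0 := by simp [WN]

lemma WN_nonneg (u : Z2 → ℝ) (hu : ∀ k, 0 ≤ u k) (f : TP) : 0 ≤ WN u f :=
  Finset.sum_nonneg fun k _ => mul_nonneg (hu k) (abs_nonneg _)

lemma WN_smul (u : Z2 → ℝ) (a : ℝ) (f : TP) : WN u (a • f) = |a| * WN u f := by
  rw [WN_eq u (a • f) f.support Finsupp.support_smul, WN_eq u f f.support subset_rfl, Finset.mul_sum]
  refine Finset.sum_congr rfl fun k _ => ?_
  rw [Finsupp.smul_apply, smul_eq_mul, abs_mul]; ring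

lemma WN_sum_le {ι : Type*} (u : Z2 → ℝ) (hu : ∀ k, 0 ≤ u k) (s : Finset ι) (F : ι → TP) :
    WN u (∑ i ∈ s, F i) ≤ ∑ i ∈ s, WN u (F i) := by
  classical
  induction s using Finset.induction_on with
  | empty => simp
  | insert a s ha ih =>
    rw [Finset.sum_insert ha, Finset.sum_insert ha]
    exact (WN_add_le u hu _ _).trans (by linarith)

@[simp] lemma WN_single (u : Z2 → ℝ) (k : Z2) (a : ℝ) : WN u (Finsupp.single k a) = u k * |a| := by
  simp [WN, Finsupp.sum_single_index]

lemma NN_add_le (f g : TP) : NN (f + g) ≤ NN f + NN g := WN_add_le _ (by simp) f g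
lemma NN_nonneg (f : TP) : 0 ≤ NN f := WN_nonneg _ (by simp) f
lemma NN_smul (a : ℝ) (f : TP) : NN (a • f) = |a| * NN f := WN_smul _ a f
lemma NN_neg (f : TP) : NN (-f) = NN f := by
  have := NN_smul (-1) f; simpa using this
lemma NN_sub_le (f g : TP) : NN (f - g) ≤ NN f + NN g := by
  rw [sub_eq_add_neg, ← NN_neg g]; exact NN_add_le _ _
lemma NN_sum_le {ι : Type*} (s : Finset ι) (F : ι → TP) : NN (∑ i ∈ s, F i) ≤ ∑ i ∈ s, NN (F i) :=
  WN_sum_le _ (by simp) s F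
@[simp] lemma NN_zero : NN 0 = 0 := WN_zero _
@[simp] lemma NN_single (k : Z2) (a : ℝ) : NN (Finsupp.single k a) = |a| := by simp [NN]

lemma abs_apply_le_NN (f : TP) (k : Z2) : |f k| ≤ NN f := by
  classical
  rw [NN, WN_eq _ f (insert k f.support) (Finset.subset_insert _ _)]
  have := Finset.single_le_sum (f := fun k => 1 * |f k|) (s := insert k f.support)
    (fun i _ => by positivity) (Finset.mem_insert_self k _)
  simpa using this

lemma WN_le_of_supp (u : Z2 → ℝ) (R : ℝ) (f : TP) (h : ∀ k, f k ≠ 0 → u k ≤ R) :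
    WN u f ≤ R * NN f := by
  rw [NN, WN_eq u f f.support subset_rfl, WN_eq _ f f.support subset_rfl, Finset.mul_sum]
  refine Finset.sum_le_sum fun k hk => ?_
  have := mul_le_mul_of_nonneg_right (h k (Finsupp.mem_support_iff.1 hk)) (abs_nonneg (f k))
  simpa using this

/-- bilinear Fourier multiplier -/
def bil (S : Z2 → Z2 → ℝ) : TP →ₗ[ℝ] TP →ₗ[ℝ] TP :=
  LinearMap.mk₂ ℝ
    (fun f g => f.sum fun k a => g.sum fun m b => Finsupp.single (k + m) (S k m * a * b))
    (by
      intro f f' g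
      refine Finsupp.sum_add_index' (by simp) ?_
      intro k a b
      rw [← Finsupp.sum_add]
      refine Finsupp.sum_congr fun m _ => ?_
      rw [← Finsupp.single_add]; congr 1; ring)
    (by
      intro a f g
      rw [Finsupp.sum_smul_index' (by simp), Finsupp.smul_sum]
      refine Finsupp.sum_congr fun k _ => ?_
      rw [Finsupp.smul_sum]
      refine Finsupp.sum_congr fun m _ => ?_
      rw [Finsupp.smul_single]; congr 1; simp; ring)
    (by
      intro f g g'
      rw [← Finsupp.sum_add]
      refine Finsupp.sum_congr fun k _ => ?_
      refine Finsupp.sum_add_index' (by simp) ?_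
      intro k a b
      rw [← Finsupp.single_add]; congr 1; ring)
    (by
      intro a f g
      rw [Finsupp.smul_sum]
      refine Finsupp.sum_congr fun k _ => ?_
      rw [Finsupp.sum_smul_index' (by simp), Finsupp.smul_sum]
      refine Finsupp.sum_congr fun m _ => ?_
      rw [Finsupp.smul_single]; congr 1; simp; ring)

lemma bil_def (S : Z2 → Z2 → ℝ) (f g : TP) : bil S f g =
    f.sum fun k a => g.sum fun m b => Finsupp.single (k + m) (S k m * a * b) := rfl

lemma bil_def' (S : Z2 → Z2 → ℝ) (f g : TP) : bil S f g =
    ∑ k ∈ f.support, ∑ m ∈ g.support, Finsupp.single (k + m) (S k m * f k * g m) := rfl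

lemma NN_bil_le (S : Z2 → Z2 → ℝ) (u v : Z2 → ℝ) (f g : TP)
    (h : ∀ k m, f k ≠ 0 → g m ≠ 0 → |S k m| ≤ u k * v m) : NN (bil S f g) ≤ WN u f * WN v g := by
  rw [bil_def', WN_eq u f _ subset_rfl, WN_eq v g _ subset_rfl, Finset.sum_mul_sum]
  refine (NN_sum_le _ _).trans (Finset.sum_le_sum fun k hk => ?_)
  refine (NN_sum_le _ _).trans (Finset.sum_le_sum fun m hm => ?_)
  rw [NN_single, abs_mul, abs_mul]
  have := h k m (Finsupp.mem_support_iff.1 hk) (Finsupp.mem_support_iff.1 hm)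
  calc |S k m| * |f k| * |g m| ≤ (u k * v m) * |f k| * |g m| := by gcongr
    _ = _ := by ring

lemma NN_bil_le' (S : Z2 → Z2 → ℝ) (M : ℝ) (f g : TP)
    (h : ∀ k m, f k ≠ 0 → g m ≠ 0 → |S k m| ≤ M) : NN (bil S f g) ≤ M * NN f * NN g := by
  have := NN_bil_le S (fun _ => M) (fun _ => 1) f g (by simpa using h)
  refine this.trans (le_of_eq ?_)
  unfold NN
  congr 1
  simp [WN, Finsupp.sum, Finset.mul_sum]

lemma bil_comm (S : Z2 → Z2 → ℝ) (hS : ∀ k m, S k m = S m k) (f g : TP) :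
    bil S f g = bil S g f := by
  rw [bil_def', bil_def', Finset.sum_comm]
  refine Finset.sum_congr rfl fun m _ => Finset.sum_congr rfl fun k _ => ?_
  rw [hS, add_comm]; congr 1; ring

lemma bil_sub_symbol (S S' : Z2 → Z2 → ℝ) (f g : TP) :
    bil (fun k m => S k m - S' k m) f g = bil S f g - bil S' f g := by
  rw [bil_def', bil_def', bil_def', ← Finset.sum_sub_distrib]
  refine Finset.sum_congr rfl fun k _ => ?_
  rw [← Finset.sum_sub_distrib]
  refine Finset.sum_congr rfl fun m _ => ?_
  rw [← Finsupp.single_sub]; congr 1; ring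

lemma bil_apply (S : Z2 → Z2 → ℝ) (f g : TP) (m : Z2) :
    bil S f g m = ∑ k ∈ f.support, S k (m - k) * f k * g (m - k) := by
  classical
  rw [bil_def', Finsupp.finsetSum_apply]
  refine Finset.sum_congr rfl fun k _ => ?_
  rw [Finsupp.finsetSum_apply]
  by_cases h : m - k ∈ g.support
  · rw [Finset.sum_eq_single (m - k)]
    · rw [add_sub_cancel, Finsupp.single_eq_same]
    · intro b _ hb
      rw [Finsupp.single_apply, if_neg]
      intro hh; apply hb; rw [← hh]; abel
    · intro hh; exact absurd h hh
  · rw [Finsupp.notMem_support_iff.1 h, mul_zero]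
    refine Finset.sum_eq_zero fun b hb => ?_
    rw [Finsupp.single_apply, if_neg]
    intro hh; apply h; rw [← hh]; simpa using hb

lemma bil_apply_tsum (S : Z2 → Z2 → ℝ) (f g : TP) (m : Z2) :
    bil S f g m = ∑' k, S k (m - k) * f k * g (m - k) := by
  rw [bil_apply, tsum_eq_sum]
  intro k hk
  rw [Finsupp.notMem_support_iff.1 hk]; ring

lemma bil_supp (S : Z2 → Z2 → ℝ) (f g : TP) (m : Z2) (h : bil S f g m ≠ 0) :
    ∃ k, f k ≠ 0 ∧ g (m - k) ≠ 0 ∧ S k (m - k) ≠ 0 := by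
  rw [bil_apply] at h
  obtain ⟨k, _, hk⟩ := Finset.exists_ne_zero_of_sum_ne_zero h
  refine ⟨k, ?_, ?_, ?_⟩ <;> intro h0 <;> apply hk <;> rw [h0] <;> ring

/-- Fourier multiplier -/
def mulOp (M : Z2 → ℝ) : TP →ₗ[ℝ] TP where
  toFun f := Finsupp.onFinset f.support (fun k => M k * f k) (by
    intro k hk; rw [Finsupp.mem_support_iff]; intro h; apply hk; rw [h, mul_zero])
  map_add' f g := by ext k; simp [mul_add]
  map_smul' a f := by ext k; simp; ring

@[simp] lemma mulOp_apply (M : Z2 → ℝ) (f : TP) (k : Z2) : mulOp M f k = M k * f k := rfl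

lemma NN_mulOp_le (M : Z2 → ℝ) (R : ℝ) (f : TP) (h : ∀ k, f k ≠ 0 → |M k| ≤ R) :
    NN (mulOp M f) ≤ R * NN f := by
  rw [NN, WN_eq _ (mulOp M f) f.support, NN, WN_eq _ f f.support subset_rfl, Finset.mul_sum]
  · refine Finset.sum_le_sum fun k hk => ?_
    rw [mulOp_apply, abs_mul, one_mul, one_mul]
    exact mul_le_mul_of_nonneg_right (h k (Finsupp.mem_support_iff.1 hk)) (abs_nonneg _)
  · intro k hk
    rw [Finsupp.mem_support_iff] at *
    intro h0; apply hk; simp [h0]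

lemma bil_mulOp (S : Z2 → ℝ) (f g : TP) :
    bil (fun k m => S (k + m)) f g = mulOp S (bil (fun _ _ => 1) f g) := by
  ext m
  rw [mulOp_apply, bil_apply, bil_apply, Finset.mul_sum]
  refine Finset.sum_congr rfl fun k _ => ?_
  rw [add_sub_cancel]; ring

/-- frequency shift -/
def sh (κ : Z2) : TP →ₗ[ℝ] TP := Finsupp.lmapDomain ℝ ℝ (fun p => κ + p)

lemma sh_def (κ : Z2) (f : TP) : sh κ f = Finsupp.mapDomain (fun p => κ + p) f := rfl

lemma sh_apply (κ : Z2) (f : TP) (k : Z2) : sh κ f k = f (k - κ) := by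
  have := Finsupp.mapDomain_apply (add_right_injective κ) f (k - κ)
  simpa [sh_def] using this

lemma sh_zero (f : TP) : sh 0 f = f := by ext k; rw [sh_apply, sub_zero]

lemma NN_sh (κ : Z2) (f : TP) : NN (sh κ f) = NN f := by
  rw [NN, WN, sh_def, Finsupp.sum_mapDomain_index_inj (add_right_injective κ)]; rfl

lemma bil_sh (S : Z2 → Z2 → ℝ) (κ κ' : Z2) (f g : TP) :
    bil S (sh κ f) (sh κ' g) = sh (κ + κ') (bil (fun p p' => S (κ + p) (κ' + p')) f g) := by
  rw [bil_def, sh_def, sh_def, Finsupp.sum_mapDomain_index_inj (add_right_injective κ), bil_def',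
    map_sum]
  refine Finset.sum_congr rfl fun k _ => ?_
  beta_reduce
  rw [Finsupp.sum_mapDomain_index_inj (add_right_injective κ'), map_sum]
  refine Finset.sum_congr rfl fun m _ => ?_
  rw [sh_def, Finsupp.mapDomain_single]
  have h : κ + k + (κ' + m) = κ + κ' + (k + m) := by abel
  beta_reduce
  rw [h]

/-- even series -/
def EvenTP (f : TP) : Prop := ∀ k, f (-k) = f k

lemma EvenTP.add {f g : TP} (hf : EvenTP f) (hg : EvenTP g) : EvenTP (f + g) := by
  intro k; simp [hf k, hg k]
lemma EvenTP.sub {f g : TP} (hf : EvenTP f) (hg : EvenTP g) : EvenTP (f - g) := by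
  intro k; simp [hf k, hg k]
lemma EvenTP.smul {f : TP} (a : ℝ) (hf : EvenTP f) : EvenTP (a • f) := by
  intro k; simp [hf k]
lemma EvenTP.mulOp {f : TP} {M : Z2 → ℝ} (hM : ∀ k, M (-k) = M k) (hf : EvenTP f) :
    EvenTP (mulOp M f) := by
  intro k; simp [hf k, hM k]
lemma EvenTP.bil {f g : TP} {S : Z2 → Z2 → ℝ} (hS : ∀ k m, S (-k) (-m) = S k m)
    (hf : EvenTP f) (hg : EvenTP g) : EvenTP (bil S f g) := by
  intro m
  rw [bil_apply_tsum, bil_apply_tsum, ← (Equiv.neg Z2).tsum_eq]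
  refine tsum_congr fun k => ?_
  have : -m - (Equiv.neg Z2) k = -(m - k) := by simp; abel
  rw [this, hg]
  simp only [Equiv.neg_apply]
  rw [hf, hS]
lemma EvenTP.sh {f : TP} (κ : Z2) (hf : EvenTP f) : EvenTP (sh κ f + sh (-κ) f) := by
  intro k
  simp only [Finsupp.add_apply, sh_apply]
  rw [add_comm]
  congr 1
  · rw [← hf]; congr 1; abel
  · rw [← hf]; congr 1; abel

/-- support in a ball -/
def InB (R : ℝ) (f : TP) : Prop := ∀ k, f k ≠ 0 → knorm k ≤ R

lemma InB.mono {R R' : ℝ} {f : TP} (h : InB R f) (hR : R ≤ R') : InB R' f :=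
  fun k hk => (h k hk).trans hR
lemma InB.add {R : ℝ} {f g : TP} (hf : InB R f) (hg : InB R g) : InB R (f + g) := by
  intro k hk
  by_cases h : f k = 0
  · apply hg; intro h'; apply hk; simp [h, h']
  · exact hf k h
lemma InB.smul {R : ℝ} {f : TP} (a : ℝ) (hf : InB R f) : InB R (a • f) := by
  intro k hk; apply hf; intro h; apply hk; simp [h]
lemma InB.sub {R : ℝ} {f g : TP} (hf : InB R f) (hg : InB R g) : InB R (f - g) := by
  have := hf.add (hg.smul (-1)); simpa [sub_eq_add_neg] using this
lemma InB.mulOp {R : ℝ} {f : TP} (M : Z2 → ℝ) (hf : InB R f) : InB R (mulOp M f) := by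
  intro k hk; apply hf; intro h; apply hk; simp [h]
lemma InB.bil {R R' : ℝ} {f g : TP} (S : Z2 → Z2 → ℝ) (hf : InB R f) (hg : InB R' g) :
    InB (R + R') (bil S f g) := by
  intro m hm
  obtain ⟨k, h1, h2, _⟩ := bil_supp S f g m hm
  have := knorm_add_le k (m - k)
  rw [add_sub_cancel] at this
  exact this.trans (add_le_add (hf _ h1) (hg _ h2))

/-! ### Approximate square roots -/

def one' : TP := Finsupp.single 0 1

def mul' : TP →ₗ[ℝ] TP →ₗ[ℝ] TP := bil (fun _ _ => 1)

lemma mul'_comm (f g : TP) : mul' f g = mul' g f := bil_comm _ (by simp) f g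

lemma mul'_one (f : TP) : mul' f one' = f := by
  rw [mul'_comm]
  ext m
  rw [mul', bil_apply, one', Finsupp.support_single 0 one_ne_zero]
  simp

lemma NN_mul'_le (f g : TP) : NN (mul' f g) ≤ NN f * NN g := by
  have := NN_bil_le' (fun _ _ => 1) 1 f g (by simp); rw [one_mul] at this; exact this

lemma exists_sqrt (K : ℕ) (x : TP) (δ R : ℝ) (hδ : 0 ≤ δ) (hδ4 : δ ≤ 1 / 4) (hx : NN x ≤ δ)
    (hR : 0 ≤ R) (hxR : InB R x) (hxe : EvenTP x) :
    ∃ s : TP, EvenTP s ∧ InB (2 ^ K * R) s ∧ NN (s - one') ≤ δ - δ * (2 * δ) ^ K ∧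
      NN (one' + x - mul' s s) ≤ δ * (2 * δ) ^ K := by
  have hone : EvenTP one' := by
    intro k; simp [one', Finsupp.single_apply, eq_comm]
  induction K with
  | zero =>
    refine ⟨one', hone, ?_, ?_, ?_⟩
    · intro k hk
      have : k = 0 := by
        by_contra h; apply hk; simp [one', Ne.symm h]
      subst this; simpa using hR
    · simp
    · rw [mul'_one]; simpa using hx
  | succ K ih =>
    obtain ⟨s, h1, h2, h3, h4⟩ := ih
    set e := one' + x - mul' s s with he
    have hInB1 : InB (2 ^ (K + 1) * R) one' := by
      intro k hk
      have : k = 0 := by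
        by_contra h; apply hk; simp [one', Ne.symm h]
      subst this; simp; positivity
    have heB : InB (2 ^ (K + 1) * R) e := by
      refine (hInB1.add (hxR.mono ?_)).sub ((h2.bil _ h2).mono ?_)
      · have : (1 : ℝ) ≤ 2 ^ (K + 1) := one_le_pow₀ (by norm_num)
        nlinarith
      · rw [pow_succ]; linarith
    have hee : EvenTP e := (hone.add hxe).sub (h1.bil (by simp) h1)
    have hp : 0 ≤ δ * (2 * δ) ^ K := by positivity
    have hpl : δ * (2 * δ) ^ K ≤ δ := by
      have : (2 * δ) ^ K ≤ 1 := pow_le_one₀ (by linarith) (by linarith)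
      nlinarith
    refine ⟨s + (1 / 2 : ℝ) • e, h1.add (hee.smul _), ?_, ?_, ?_⟩
    · refine (h2.mono ?_).add (heB.smul _)
      have : (2 : ℝ) ^ K ≤ 2 ^ (K + 1) := pow_le_pow_right₀ (by norm_num) (by omega)
      nlinarith
    · have : s + (1 / 2 : ℝ) • e - one' = (s - one') + (1 / 2 : ℝ) • e := by abel
      rw [this]
      refine (NN_add_le _ _).trans ?_
      rw [NN_smul, abs_of_pos (by norm_num : (0 : ℝ) < 1 / 2), pow_succ]
      have : δ * ((2 * δ) ^ K * (2 * δ)) ≤ δ * (2 * δ) ^ K / 2 := by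
        nlinarith
      linarith
    · have : one' + x - mul' (s + (1 / 2 : ℝ) • e) (s + (1 / 2 : ℝ) • e)
          = - mul' e (s - one') - (1 / 4 : ℝ) • mul' e e := by
        simp only [map_add, map_sub, map_smul, LinearMap.add_apply, LinearMap.smul_apply, mul'_one]
        rw [mul'_comm s e]
        have : mul' s s = one' + x - e := by rw [he]; abel
        rw [this]
        module
      rw [this]
      refine (NN_sub_le _ _).trans ?_
      rw [NN_neg, NN_smul, abs_of_pos (by norm_num : (0 : ℝ) < 1 / 4)]
      have a1 := NN_mul'_le e (s - one')
      have a2 := NN_mul'_le e e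
      have e0 := NN_nonneg e
      have s0 := NN_nonneg (s - one')
      have a3 : NN e * NN (s - one') ≤ (δ * (2 * δ) ^ K) * δ := by
        apply mul_le_mul h4 _ s0 hp; linarith
      have a4 : NN e * NN e ≤ (δ * (2 * δ) ^ K) * δ := by
        apply mul_le_mul h4 _ e0 hp; linarith
      rw [pow_succ]
      nlinarith

/-! ### One step of the iteration -/

/-- the residual, in the form `Δ⁻¹`(equation) -/
def res (ν γ : ℝ) (f : TP) : TP := bil Qs f f + mulOp (fun k => ν * knorm k ^ (γ - 1)) f

def kap (n : ℕ) (j : Bool) : Z2 := if j then (5 * n, 0) else (3 * n, 4 * n)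

def ks (n : ℕ) (i : Bool × Bool) : Z2 := if i.2 then kap n i.1 else -kap n i.1

def RR (j : Bool) (m : Z2) : ℝ :=
  if j then 7 * ((m.2 : ℝ) ^ 2 - (m.1 : ℝ) ^ 2) / (12 * knorm m ^ 2) + 4 * (m.1 : ℝ) * m.2 / knorm m ^ 2
  else 25 * ((m.2 : ℝ) ^ 2 - (m.1 : ℝ) ^ 2) / (12 * knorm m ^ 2)

lemma knorm_kap (n : ℕ) (j : Bool) : knorm (kap n j) = 5 * n := by
  have h : knorm (kap n j) ^ 2 = (5 * (n : ℝ)) ^ 2 := by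
    rw [knorm_sq]; cases j <;> simp [kap] <;> ring
  exact (pow_left_inj₀ (knorm_nonneg _) (by positivity) two_ne_zero).1 h

lemma knorm_ks (n : ℕ) (i : Bool × Bool) : knorm (ks n i) = 5 * n := by
  unfold ks; split_ifs <;> simp [knorm_kap]

lemma RR_neg (j : Bool) (m : Z2) : RR j (-m) = RR j m := by
  unfold RR; simp

lemma abs_RR_le (j : Bool) (m : Z2) : |RR j m| ≤ 3 := by
  by_cases hm : m = 0
  · subst hm; simp [RR]
  have hp := knorm_pos hm
  have hs := knorm_sq m
  have h2 : 0 < knorm m ^ 2 := by positivity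
  cases j
  · have : RR false m = (25 * ((m.2 : ℝ) ^ 2 - (m.1 : ℝ) ^ 2) / 12) / knorm m ^ 2 := by
      simp [RR]; field_simp
    rw [this, abs_div, abs_of_pos h2, div_le_iff₀ h2, hs, abs_le]
    constructor <;> nlinarith [sq_nonneg (m.1 : ℝ), sq_nonneg (m.2 : ℝ)]
  · have : RR true m = (7 * ((m.2 : ℝ) ^ 2 - (m.1 : ℝ) ^ 2) / 12 + 4 * (m.1 : ℝ) * m.2) / knorm m ^ 2 := by
      simp [RR]; field_simp
    rw [this, abs_div, abs_of_pos h2, div_le_iff₀ h2, hs, abs_le]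
    constructor <;> nlinarith [sq_nonneg (m.1 : ℝ), sq_nonneg (m.2 : ℝ),
      sq_nonneg ((m.1 : ℝ) + m.2), sq_nonneg ((m.1 : ℝ) - m.2)]

lemma sg_RR (n : ℕ) (hn : 0 < n) (m : Z2) (hm : m ≠ 0) :
    sg (kap n true) m * RR true m + sg (kap n false) m * RR false m = 1 := by
  have hp := knorm_pos hm
  have hs := knorm_sq m
  have hn' : (0 : ℝ) < n := by exact_mod_cast hn
  unfold sg
  rw [knorm_kap, knorm_kap]
  simp only [RR, cross, dotp, kap, if_true, Bool.false_eq_true, if_false]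
  have h2 : knorm m ^ 2 ≠ 0 := by positivity
  rw [hs] at h2 ⊢
  push_cast
  field_simp
  ring

lemma knorm_ge_of_sq (k : Z2) (R : ℝ) (hR : 0 ≤ R) (h : R ^ 2 ≤ (k.1 : ℝ) ^ 2 + (k.2 : ℝ) ^ 2) :
    R ≤ knorm k := Real.le_sqrt_of_sq_le h

lemma ks_add_ge (n : ℕ) (i i' : Bool × Bool) (h : i' ≠ (i.1, !i.2)) :
    4 * (n : ℝ) ≤ knorm (ks n i + ks n i') := by
  have key : ∀ x y : ℤ, 16 ≤ x ^ 2 + y ^ 2 → 4 * (n : ℝ) ≤ knorm ((x * n, y * n) : Z2) := by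
    intro x y hxy
    apply knorm_ge_of_sq _ _ (by positivity)
    have : (16 : ℝ) ≤ (x : ℝ) ^ 2 + (y : ℝ) ^ 2 := by exact_mod_cast hxy
    push_cast
    nlinarith [sq_nonneg (n : ℝ)]
  have conv : ∀ (z : Z2) (x y : ℤ), z = (x * n, y * n) → 16 ≤ x ^ 2 + y ^ 2 →
      4 * (n : ℝ) ≤ knorm z := by
    intro z x y hz; rw [hz]; exact key x y
  obtain ⟨j, s⟩ := i
  obtain ⟨j', s'⟩ := i'
  cases j <;> cases s <;> cases j' <;> cases s' <;> first
    | (exfalso; exact h rfl)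
    | (refine conv _ (-6) (-8) ?_ (by norm_num); ext <;> simp [ks, kap] <;> ring1)
    | (refine conv _ 6 8 ?_ (by norm_num); ext <;> simp [ks, kap] <;> ring1)
    | (refine conv _ 10 0 ?_ (by norm_num); ext <;> simp [ks, kap] <;> ring1)
    | (refine conv _ (-10) 0 ?_ (by norm_num); ext <;> simp [ks, kap] <;> ring1)
    | (refine conv _ 8 4 ?_ (by norm_num); ext <;> simp [ks, kap] <;> ring1)
    | (refine conv _ (-8) (-4) ?_ (by norm_num); ext <;> simp [ks, kap] <;> ring1)
    | (refine conv _ (-2) 4 ?_ (by norm_num); ext <;> simp [ks, kap] <;> ring1)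
    | (refine conv _ 2 (-4) ?_ (by norm_num); ext <;> simp [ks, kap] <;> ring1)

lemma ks_op (n : ℕ) (i : Bool × Bool) : ks n (i.1, !i.2) = -ks n i := by
  obtain ⟨j, s⟩ := i
  cases s <;> simp [ks]

lemma sg_ks (n : ℕ) (i : Bool × Bool) (m : Z2) : sg (ks n i) m = sg (kap n i.1) m := by
  unfold ks; split_ifs
  · rfl
  · rw [sg_neg]

lemma knorm_shift {κ p : Z2} {mu : ℝ} (h : knorm p ≤ mu) : |knorm (κ + p) - knorm κ| ≤ mu := by
  have a1 := knorm_add_le κ p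
  have a2 := knorm_sub_le (κ + p) p
  rw [add_sub_cancel_right] at a2
  rw [abs_le]; constructor <;> linarith

lemma res_InB (ν γ : ℝ) (f : TP) (R : ℝ) (hR : 0 ≤ R) (h : InB R f) : InB (2 * R) (res ν γ f) := by
  refine ((h.bil _ h).mono (by linarith)).add ((h.mulOp _).mono (by linarith))

lemma res_even (ν γ : ℝ) (f : TP) (h : EvenTP f) : EvenTP (res ν γ f) :=
  (h.bil Qs_neg h).add (h.mulOp (by simp))

lemma res_zero (ν γ : ℝ) (f : TP) (h : f 0 = 0) : res ν γ f 0 = 0 := by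
  simp only [res, Finsupp.add_apply, mulOp_apply, h, mul_zero, add_zero]
  rw [bil_apply]
  refine Finset.sum_eq_zero fun k _ => ?_
  rw [Qs_zero _ _ (by abel)]; ring

lemma high_bound (a a' : TP) (n : ℕ) (hn : 0 < n) (mu T : ℝ) (hmu : 16 * mu ≤ 5 * n) (i i' : Bool × Bool)
    (ha : InB mu a) (ha' : InB mu a') (hT : NN a ≤ T) (hT' : NN a' ≤ T) (hmu0 : 0 ≤ mu)
    (h : i' ≠ (i.1, !i.2)) :
    NN (bil Qs (sh (ks n i) a) (sh (ks n i') a')) ≤ 4 * mu * T ^ 2 := by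
  rw [bil_sh, NN_sh]
  have hn' : (0 : ℝ) < n := by exact_mod_cast hn
  refine (NN_bil_le' _ (4 * mu) a a' ?_).trans ?_
  · intro p p' hp hp'
    have b1 := knorm_shift (κ := ks n i) (ha p hp)
    have b2 := knorm_shift (κ := ks n i') (ha' p' hp')
    rw [knorm_ks] at b1 b2
    refine abs_Qs_le_high _ _ (5 * n) mu b1 b2 (by linarith) (by linarith) ?_
    have c1 := ks_add_ge n i i' h
    have c2 := knorm_sub_le (ks n i + p + (ks n i' + p')) (p + p')
    have c3 := knorm_add_le p p'
    have : ks n i + p + (ks n i' + p') - (p + p') = ks n i + ks n i' := by abel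
    rw [this] at c2
    have := ha p hp
    have := ha' p' hp'
    linarith
  · have := NN_nonneg a
    have := NN_nonneg a'
    have : NN a * NN a' ≤ T * T := mul_le_mul hT hT' (NN_nonneg _) (by linarith)
    nlinarith

lemma low_bound (a : TP) (n : ℕ) (hn : 0 < n) (mu T : ℝ) (hmu : 16 * mu ≤ 5 * n) (i : Bool × Bool)
    (ha : InB mu a) (hT : NN a ≤ T) (hmu0 : 0 ≤ mu) :
    NN (bil Qs (sh (ks n i) a) (sh (ks n (i.1, !i.2)) a)
      - (5 * n / 2 : ℝ) • mulOp (sg (kap n i.1)) (mul' a a)) ≤ 3 * mu * T ^ 2 := by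
  have hn' : (0 : ℝ) < n := by exact_mod_cast hn
  rw [ks_op, bil_sh, add_neg_cancel, sh_zero]
  have e : (5 * n / 2 : ℝ) • mulOp (sg (kap n i.1)) (mul' a a)
      = bil (fun p p' => knorm (ks n i) / 2 * sg (ks n i) (p + p')) a a := by
    rw [bil_mulOp (fun m => knorm (ks n i) / 2 * sg (ks n i) m), knorm_ks]
    ext m
    simp only [Finsupp.smul_apply, mulOp_apply, smul_eq_mul, mul', sg_ks]
    ring
  rw [e, ← bil_sub_symbol]
  have hk0 : ks n i ≠ 0 := by
    intro h0
    have := knorm_ks n i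
    rw [h0, knorm_zero] at this
    linarith
  refine (NN_bil_le' _ (3 * mu) a a ?_).trans ?_
  · intro p p' hp hp'
    refine Qs_low _ p p' mu (ha p hp) (ha p' hp') ?_ hk0
    rw [knorm_ks]; linarith
  · have := NN_nonneg a
    have : NN a * NN a ≤ T * T := mul_le_mul hT hT (NN_nonneg _) (by linarith)
    nlinarith

lemma rpow_annulus (x lam s : ℝ) (hl : 0 < lam) (h1 : lam / 2 ≤ x) (h2 : x ≤ 2 * lam)
    (hs : -1 ≤ s) (hs' : s ≤ 1) : x ^ s ≤ 2 * lam ^ s := by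
  have hx : 0 < x := by linarith
  have e : x ^ s = (x / lam) ^ s * lam ^ s := by
    rw [← Real.mul_rpow (by positivity) hl.le, div_mul_cancel₀ _ hl.ne']
  rw [e]
  gcongr
  have hy1 : 1 / 2 ≤ x / lam := by rw [le_div_iff₀ hl]; linarith
  have hy2 : x / lam ≤ 2 := by rw [div_le_iff₀ hl]; linarith
  have hy0 : 0 < x / lam := by positivity
  rcases le_total 0 s with h | h
  · calc (x / lam) ^ s ≤ 2 ^ s := Real.rpow_le_rpow hy0.le hy2 h
      _ ≤ 2 ^ (1 : ℝ) := Real.rpow_le_rpow_of_exponent_le (by norm_num) hs'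
      _ = 2 := by norm_num
  · calc (x / lam) ^ s ≤ (1 / 2) ^ s := Real.rpow_le_rpow_of_nonpos (by norm_num) hy1 h
      _ ≤ (1 / 2) ^ (-1 : ℝ) := Real.rpow_le_rpow_of_exponent_ge (by norm_num) (by norm_num) hs
      _ = 2 := by rw [Real.rpow_neg_one]; norm_num

lemma main_cancel (n : ℕ) (hn : 0 < n) (q : TP) (hq : q 0 = 0) (r : ℝ) (hr : 0 < r) :
    ∑ j : Bool, r • mulOp (sg (kap n j)) (one' + (-(1 / r)) • mulOp (RR j) q) = -q := by
  ext m
  simp only [Fintype.sum_bool, Finsupp.add_apply, Finsupp.smul_apply, mulOp_apply, smul_eq_mul,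
    Finsupp.neg_apply]
  by_cases hm : m = 0
  · subst hm; simp [hq, sg]
  · have h1 : one' m = 0 := by simp [one', hm]
    rw [h1]
    have := sg_RR n hn m hm
    field_simp
    linear_combination (-q m) * this

lemma step (K : ℕ) (ν γ : ℝ) (hν : 0 ≤ ν) (hγ1 : 0 < γ) (hγ2 : γ < 3 / 2) (f : TP) (hfe : EvenTP f)
    (hf0 : f 0 = 0) (L : ℝ) (hL : 0 ≤ L) (hfL : InB (2 * L) f) (n : ℕ) (hn : 0 < n) (mu lam : ℝ)
    (hmudef : mu = 2 ^ K * (4 * L)) (hlam : lam = 5 * n) (hmu : 16 * mu ≤ lam)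
    (r δ t : ℝ) (hr : 0 < r) (ht : t = Real.sqrt (r / lam)) (hδ4 : δ ≤ 1 / 4)
    (hδ : 3 * NN (res ν γ f) / r ≤ δ) :
    ∃ w : TP, EvenTP w ∧ (∀ k, w k ≠ 0 → |knorm k - lam| ≤ mu) ∧ NN w ≤ 8 * t ∧
      w (kap n true) ≠ 0 ∧
      NN (res ν γ (f + w)) ≤ 240 * mu * t ^ 2 + 8 * WN knorm f * t + 16 * ν * lam ^ (γ - 1) * t
        + 2 * r * (δ * (2 * δ) ^ K) := by
  have hn' : (0 : ℝ) < n := by exact_mod_cast hn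
  have hlam0 : 0 < lam := by rw [hlam]; positivity
  have ht0 : 0 < t := by rw [ht]; exact Real.sqrt_pos.2 (by positivity)
  have ht2 : lam * t ^ 2 = r := by
    rw [ht, Real.sq_sqrt (by positivity)]; field_simp
  have hmu0 : 0 ≤ mu := by rw [hmudef]; positivity
  set q := res ν γ f with hq
  have hq0 : q 0 = 0 := res_zero ν γ f hf0
  have hqe : EvenTP q := res_even ν γ f hfe
  have hqB : InB (4 * L) q := by
    have := res_InB ν γ f (2 * L) (by linarith) hfL
    exact this.mono (by linarith)
  have hδ0 : 0 ≤ δ := le_trans (by have := NN_nonneg q; positivity) hδ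
  have hex : ∀ j : Bool, ∃ s : TP, EvenTP s ∧ InB mu s ∧ NN (s - one') ≤ δ - δ * (2 * δ) ^ K ∧
      NN (one' + (-(1 / r)) • mulOp (RR j) q - mul' s s) ≤ δ * (2 * δ) ^ K := by
    intro j
    rw [hmudef]
    refine exists_sqrt K _ δ (4 * L) hδ0 hδ4 ?_ (by linarith) ((hqB.mulOp _).smul _)
      ((hqe.mulOp (RR_neg j)).smul _)
    rw [NN_smul]
    refine le_trans ?_ hδ
    have := NN_mulOp_le (RR j) 3 q (fun k _ => abs_RR_le j k)
    rw [abs_neg, abs_of_pos (by positivity)]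
    rw [div_mul_eq_mul_div, one_mul]
    gcongr
  choose s hse hsB hs1 hs2 using hex
  set ep := δ * (2 * δ) ^ K with hep
  have hep0 : 0 ≤ ep := by positivity
  set a : Bool → TP := fun j => t • s j with ha
  have hone : NN one' = 1 := by simp [one']
  have haN : ∀ j, NN (a j) ≤ 2 * t := by
    intro j
    rw [ha]; simp only; rw [NN_smul, abs_of_pos ht0]
    have : NN (s j) ≤ NN (s j - one') + NN one' := by
      have := NN_add_le (s j - one') one'
      simpa using this
    have := hs1 j
    nlinarith
  have haB : ∀ j, InB mu (a j) := fun j => (hsB j).smul t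
  set U : Bool × Bool → TP := fun i => sh (ks n i) (a i.1) with hU
  set w : TP := ∑ i, U i with hw
  have hwk : ∀ k, w k ≠ 0 → |knorm k - lam| ≤ mu := by
    intro k hk
    rw [hw, Finsupp.finsetSum_apply] at hk
    obtain ⟨i, _, hi⟩ := Finset.exists_ne_zero_of_sum_ne_zero hk
    simp only [hU, sh_apply] at hi
    have := knorm_shift (κ := ks n i) (haB _ _ hi)
    rw [knorm_ks, add_sub_cancel, ← hlam] at this
    exact this
  have hwN : NN w ≤ 8 * t := by
    refine (NN_sum_le _ _).trans ?_
    have : ∀ i ∈ (Finset.univ : Finset (Bool × Bool)), NN (U i) ≤ 2 * t := by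
      intro i _
      simp only [hU, NN_sh]; exact haN _
    refine (Finset.sum_le_card_nsmul _ _ _ this).trans ?_
    simp; linarith
  refine ⟨w, ?_, hwk, hwN, ?_, ?_⟩
  · have e : w = (sh (kap n true) (a true) + sh (-kap n true) (a true))
        + (sh (kap n false) (a false) + sh (-kap n false) (a false)) := by
      rw [hw, Fintype.sum_prod_type]; simp [hU, ks]
    rw [e]
    exact (EvenTP.sh _ ((hse _).smul t)).add (EvenTP.sh _ ((hse _).smul t))
  · rw [hw, Finsupp.finsetSum_apply]
    rw [Finset.sum_eq_single (true, true)]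
    · simp only [hU, sh_apply, ks, if_true, sub_self, ha, Finsupp.smul_apply, smul_eq_mul]
      apply mul_ne_zero ht0.ne'
      intro h0
      have := (abs_apply_le_NN (s true - one') 0).trans (hs1 true)
      simp [h0, one'] at this
      linarith
    · intro i _ hi
      by_contra hne
      simp only [hU, sh_apply] at hne
      have h1 := haB _ _ hne
      have h2 := ks_add_ge n (true, true) (i.1, !i.2) (by
        intro h; apply hi; obtain ⟨x, y⟩ := i; simpa using h)
      rw [ks_op, ← sub_eq_add_neg] at h2
      simp only [ks, if_true] at h2 h1
      linarith
    · simp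
  · -- the estimate
    have hbil : bil Qs w w = ∑ i, bil Qs (U i) (U (i.1, !i.2))
        + ∑ i, ∑ i' ∈ Finset.univ.erase (i.1, !i.2), bil Qs (U i) (U i') := by
      have h1 : bil Qs w w = ∑ i, ∑ i', bil Qs (U i) (U i') := by
        rw [hw]; simp only [map_sum, LinearMap.sum_apply]
        try rw [Finset.sum_comm]
      rw [h1, ← Finset.sum_add_distrib]
      refine Finset.sum_congr rfl fun i _ => ?_
      exact (Finset.add_sum_erase Finset.univ (fun i' => bil Qs (U i) (U i')) (Finset.mem_univ (i.1, !i.2))).symm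
    have hlow : ∑ i, bil Qs (U i) (U (i.1, !i.2)) =
        ∑ i, (bil Qs (U i) (U (i.1, !i.2))
          - (5 * n / 2 : ℝ) • mulOp (sg (kap n i.1)) (mul' (a i.1) (a i.1)))
        + (-q - ∑ j, r • mulOp (sg (kap n j)) (one' + (-(1 / r)) • mulOp (RR j) q - mul' (s j) (s j))) := by
      rw [Finset.sum_sub_distrib]
      have e1 : ∑ i : Bool × Bool, (5 * n / 2 : ℝ) • mulOp (sg (kap n i.1)) (mul' (a i.1) (a i.1))
          = ∑ j, r • mulOp (sg (kap n j)) (mul' (s j) (s j)) := by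
        rw [Fintype.sum_prod_type]
        refine Finset.sum_congr rfl fun j _ => ?_
        simp only [Fintype.sum_bool, ha, map_smul, LinearMap.smul_apply]
        rw [← ht2, hlam]
        module
      rw [e1, ← main_cancel n hn q hq0 r hr, ← Finset.sum_sub_distrib]
      have e2 : ∀ j, r • mulOp (sg (kap n j)) (one' + (-(1 / r)) • mulOp (RR j) q)
          - r • mulOp (sg (kap n j)) (one' + (-(1 / r)) • mulOp (RR j) q - mul' (s j) (s j))
          = r • mulOp (sg (kap n j)) (mul' (s j) (s j)) := by
        intro j; rw [map_sub (mulOp (sg (kap n j))), smul_sub]; abel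
      simp only [e2]
      abel
    have hres : res ν γ (f + w) = (2 : ℝ) • bil Qs f w
        + ∑ i, (bil Qs (U i) (U (i.1, !i.2))
          - (5 * n / 2 : ℝ) • mulOp (sg (kap n i.1)) (mul' (a i.1) (a i.1)))
        - ∑ j, r • mulOp (sg (kap n j)) (one' + (-(1 / r)) • mulOp (RR j) q - mul' (s j) (s j))
        + ∑ i, ∑ i' ∈ Finset.univ.erase (i.1, !i.2), bil Qs (U i) (U i')
        + mulOp (fun k => ν * knorm k ^ (γ - 1)) w := by
      have e0 : res ν γ (f + w) = q + (2 : ℝ) • bil Qs f w + bil Qs w w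
          + mulOp (fun k => ν * knorm k ^ (γ - 1)) w := by
        rw [hq]; unfold res
        simp only [map_add, LinearMap.add_apply]
        rw [bil_comm Qs Qs_comm w f, two_smul]
        abel
      rw [e0, hbil, hlow]
      abel
    have B1 : NN ((2 : ℝ) • bil Qs f w) ≤ 8 * WN knorm f * t := by
      rw [NN_smul, abs_of_pos (by norm_num : (0 : ℝ) < 2)]
      have h1 := NN_bil_le Qs knorm (fun _ => 1 / 2) f w (by
        intro k m _ _; have := abs_Qs_le_left k m; linarith)
      have h2 := WN_le_of_supp (fun _ => (1 / 2 : ℝ)) (1 / 2) w (by simp)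
      have h3 := WN_nonneg knorm knorm_nonneg f
      have h4 : WN knorm f * WN (fun _ => 1 / 2) w ≤ WN knorm f * (1 / 2 * (8 * t)) := by
        gcongr; linarith
      linarith
    have B2 : NN (∑ i, (bil Qs (U i) (U (i.1, !i.2))
          - (5 * n / 2 : ℝ) • mulOp (sg (kap n i.1)) (mul' (a i.1) (a i.1)))) ≤ 48 * mu * t ^ 2 := by
      refine (NN_sum_le _ _).trans ?_
      refine (Finset.sum_le_card_nsmul _ _ (3 * mu * (2 * t) ^ 2) ?_).trans ?_
      · intro i _
        exact low_bound (a i.1) n hn mu (2 * t) (by rw [← hlam]; exact hmu) i (haB _) (haN _) hmu0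
      · simp; linarith
    have B3 : NN (∑ j, r • mulOp (sg (kap n j)) (one' + (-(1 / r)) • mulOp (RR j) q - mul' (s j) (s j)))
        ≤ 2 * r * ep := by
      refine (NN_sum_le _ _).trans ?_
      refine (Finset.sum_le_card_nsmul _ _ (r * ep) ?_).trans ?_
      · intro j _
        rw [NN_smul, abs_of_pos hr]
        have := NN_mulOp_le (sg (kap n j)) 1 _ (fun k (_ : (one' + (-(1 / r)) • mulOp (RR j) q - mul' (s j) (s j)) k ≠ 0) => abs_sg_le (kap n j) k)
        have := hs2 j
        gcongr; linarith
      · simp; linarith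
    have B4 : NN (∑ i, ∑ i' ∈ Finset.univ.erase (i.1, !i.2), bil Qs (U i) (U i')) ≤ 192 * mu * t ^ 2 := by
      refine (NN_sum_le _ _).trans ?_
      refine (Finset.sum_le_card_nsmul _ _ (48 * mu * t ^ 2) ?_).trans ?_
      · intro i _
        refine (NN_sum_le _ _).trans ?_
        refine (Finset.sum_le_card_nsmul _ _ (4 * mu * (2 * t) ^ 2) ?_).trans ?_
        · intro i' hi'
          exact high_bound (a i.1) (a i'.1) n hn mu (2 * t) (by rw [← hlam]; exact hmu) i i' (haB _) (haB _)
            (haN _) (haN _) hmu0 (Finset.ne_of_mem_erase hi')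
        · rw [Finset.card_erase_of_mem (Finset.mem_univ _)]; simp; linarith
      · simp; linarith
    have B5 : NN (mulOp (fun k => ν * knorm k ^ (γ - 1)) w) ≤ 16 * ν * lam ^ (γ - 1) * t := by
      have hlp : 0 ≤ lam ^ (γ - 1) := by positivity
      refine (NN_mulOp_le _ (ν * (2 * lam ^ (γ - 1))) w ?_).trans ?_
      · intro k hk
        have := abs_le.1 (hwk k hk)
        have h1 : knorm k ^ (γ - 1) ≤ 2 * lam ^ (γ - 1) :=
          rpow_annulus _ lam _ hlam0 (by linarith) (by linarith) (by linarith) (by linarith)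
        rw [abs_of_nonneg (mul_nonneg hν (Real.rpow_nonneg (knorm_nonneg _) _))]
        gcongr
      · have : ν * (2 * lam ^ (γ - 1)) * NN w ≤ ν * (2 * lam ^ (γ - 1)) * (8 * t) := by gcongr
        linarith
    rw [hres]
    have C1 := NN_add_le ((2 : ℝ) • bil Qs f w
        + ∑ i, (bil Qs (U i) (U (i.1, !i.2))
          - (5 * n / 2 : ℝ) • mulOp (sg (kap n i.1)) (mul' (a i.1) (a i.1)))
        - ∑ j, r • mulOp (sg (kap n j)) (one' + (-(1 / r)) • mulOp (RR j) q - mul' (s j) (s j))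
        + ∑ i, ∑ i' ∈ Finset.univ.erase (i.1, !i.2), bil Qs (U i) (U i'))
        (mulOp (fun k => ν * knorm k ^ (γ - 1)) w)
    have C2 := NN_add_le ((2 : ℝ) • bil Qs f w
        + ∑ i, (bil Qs (U i) (U (i.1, !i.2))
          - (5 * n / 2 : ℝ) • mulOp (sg (kap n i.1)) (mul' (a i.1) (a i.1)))
        - ∑ j, r • mulOp (sg (kap n j)) (one' + (-(1 / r)) • mulOp (RR j) q - mul' (s j) (s j)))
        (∑ i, ∑ i' ∈ Finset.univ.erase (i.1, !i.2), bil Qs (U i) (U i'))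
    have C3 := NN_sub_le ((2 : ℝ) • bil Qs f w
        + ∑ i, (bil Qs (U i) (U (i.1, !i.2))
          - (5 * n / 2 : ℝ) • mulOp (sg (kap n i.1)) (mul' (a i.1) (a i.1))))
        (∑ j, r • mulOp (sg (kap n j)) (one' + (-(1 / r)) • mulOp (RR j) q - mul' (s j) (s j)))
    have C4 := NN_add_le ((2 : ℝ) • bil Qs f w)
        (∑ i, (bil Qs (U i) (U (i.1, !i.2))
          - (5 * n / 2 : ℝ) • mulOp (sg (kap n i.1)) (mul' (a i.1) (a i.1))))
    linarith

lemma ev_rpow (C s t : ℝ) (h : s < t) : ∀ᶠ X : ℝ in atTop, C * X ^ s ≤ X ^ t := by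
  have h1 := tendsto_rpow_atTop (y := t - s) (by linarith)
  filter_upwards [h1.eventually_ge_atTop C, eventually_gt_atTop 0] with X hX hX0
  calc C * X ^ s ≤ X ^ (t - s) * X ^ s := by gcongr
    _ = X ^ t := by rw [← Real.rpow_add hX0]; congr 1; ring

lemma exists_exps (γ α : ℝ) (hγ2 : γ < 3 / 2)
    (hα1 : 1 / 2 ≤ α) (hα2 : α < 1 / 2 + min (1 / 6) (3 / 2 - γ)) :
    ∃ (a b ε : ℝ) (K : ℕ), α < a ∧ 1 / 2 < a ∧ a < 1 ∧ 1 < b ∧ 0 < ε ∧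
      (1 - a) / b - a < -(b * (2 * a - 1 + ε)) ∧ 1 / b - 2 * a < -(b * (2 * a - 1 + ε)) ∧
      γ - 1 - a < -(b * (2 * a - 1 + ε)) ∧
      -(2 * a - 1) - (K + 1) * ε < -(b * (2 * a - 1 + ε)) := by
  have hlt : α < min (2 / 3) (2 - γ) := by
    rcases le_total (1 / 6 : ℝ) (3 / 2 - γ) with h | h
    · rw [min_eq_left h] at hα2; exact lt_min (by linarith) (by linarith)
    · rw [min_eq_right h] at hα2; exact lt_min (by linarith) (by linarith)
  obtain ⟨a, ha1, ha2⟩ := exists_between hlt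
  have ha3 := ha2.trans_le (min_le_left _ _)
  have ha4 := ha2.trans_le (min_le_right _ _)
  have hβ : 0 < 2 * a - 1 := by linarith
  have hmin : 1 < min ((1 - a) / (2 * a - 1)) ((1 + a - γ) / (2 * a - 1)) := by
    apply lt_min
    · rw [lt_div_iff₀ hβ]; linarith
    · rw [lt_div_iff₀ hβ]; linarith
  obtain ⟨b, hb1, hb2⟩ := exists_between hmin
  have hb3 := hb2.trans_le (min_le_left _ _)
  have hb4 := hb2.trans_le (min_le_right _ _)
  rw [lt_div_iff₀ hβ] at hb3 hb4
  have hb0 : 0 < b := by linarith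
  have hkey : (1 - a) / b - a + b * (2 * a - 1) < 0 := by
    have : (1 - a) / b - a + b * (2 * a - 1) = (b - 1) * (b * (2 * a - 1) - (1 - a)) / b := by
      field_simp; ring
    rw [this]
    apply div_neg_of_neg_of_pos _ hb0
    apply mul_neg_of_pos_of_neg <;> linarith
  have hε : 0 < min ((a - (1 - a) / b - b * (2 * a - 1)) / b) ((1 + a - γ - b * (2 * a - 1)) / b) := by
    apply lt_min <;> apply div_pos _ hb0 <;> linarith
  obtain ⟨ε, hε0, hε2⟩ := exists_between hε
  have hε3 := hε2.trans_le (min_le_left _ _)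
  have hε4 := hε2.trans_le (min_le_right _ _)
  rw [lt_div_iff₀ hb0] at hε3 hε4
  obtain ⟨K, hK⟩ := exists_nat_gt ((b * (2 * a - 1 + ε)) / ε)
  rw [div_lt_iff₀ hε0] at hK
  refine ⟨a, b, ε, K, ha1, by linarith, by linarith, hb1, hε0, by linarith, ?_, by linarith, by linarith⟩
  have h5 : 1 / b = (1 - a) / b + a / b := by field_simp; ring
  have h6 : a / b < a := by rw [div_lt_iff₀ hb0]; nlinarith
  linarith

lemma exists_params (ν γ α : ℝ) (hν : 0 ≤ ν) (hγ2 : γ < 3 / 2)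
    (hα1 : 1 / 2 ≤ α) (hα2 : α < 1 / 2 + min (1 / 6) (3 / 2 - γ)) :
    ∃ (a b ε : ℝ) (K : ℕ) (X0 : ℝ), α < a ∧ 1 / 2 < a ∧ a < 1 ∧ 1 < b ∧ 0 < ε ∧
      ∀ X ≥ X0, ∀ L, 1 ≤ L → L ^ b ≤ X → ∀ Y, 0 < Y → Y ≤ 10 * X ^ b →
        16 * (2 ^ K * (4 * L)) ≤ X ∧ 3 * X ^ (-ε) ≤ 1 / 4 ∧ 2 * L ^ (1 - a) ≤ X ^ (1 - a) ∧
        240 * (2 ^ K * (4 * L)) * (X ^ (-a)) ^ 2 + 8 * (32 * L ^ (1 - a)) * X ^ (-a)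
          + 16 * ν * X ^ (γ - 1) * X ^ (-a)
          + 2 * X ^ (-(2 * a - 1)) * (3 * X ^ (-ε) * (2 * (3 * X ^ (-ε))) ^ K)
          ≤ Y ^ (-(2 * a - 1 + ε)) := by
  obtain ⟨a, b, ε, K, h1, h2, h3, h4, h5, e1, e2, e3, e4⟩ := exists_exps γ α hγ2 hα1 hα2
  have hb0 : 0 < b := by linarith
  have hβ : 0 < 2 * a - 1 + ε := by linarith
  set e := b * (2 * a - 1 + ε) with he
  set c : ℝ := 10 ^ (-(2 * a - 1 + ε)) with hc
  have hc0 : 0 < c := by rw [hc]; positivity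
  have hib : 1 / b < 1 := by rw [div_lt_one hb0]; exact h4
  have A1 := ev_rpow (4 / c * (960 * 2 ^ K)) _ _ e2
  have A2 := ev_rpow (4 / c * 256) _ _ e1
  have A3 := ev_rpow (4 / c * (16 * ν)) _ _ e3
  have A4 := ev_rpow (4 / c * (2 * 3 * 6 ^ K)) _ _ e4
  have A5 := ev_rpow (16 * 2 ^ K * 4) _ _ hib
  have A6 := ev_rpow 12 (-ε) 0 (by linarith)
  have A7 := ev_rpow 2 (1 / b * (1 - a)) (1 - a) (by nlinarith)
  obtain ⟨X0, hX0⟩ := eventually_atTop.1 (A1.and (A2.and (A3.and (A4.and (A5.and (A6.and (A7.and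
    (eventually_ge_atTop 1))))))))
  refine ⟨a, b, ε, K, X0, h1, h2, h3, h4, h5, ?_⟩
  intro X hX L hL hLX Y hY0 hY
  obtain ⟨A1, A2, A3, A4, A5, A6, A7, hX1⟩ := hX0 X hX
  have hX0 : 0 < X := by linarith
  have hL0 : 0 < L := by linarith
  have hLX' : L ≤ X ^ (1 / b) := by
    have : (L ^ b) ^ (1 / b) ≤ X ^ (1 / b) := Real.rpow_le_rpow (by positivity) hLX (by positivity)
    rwa [← Real.rpow_mul hL0.le, mul_one_div_cancel hb0.ne', Real.rpow_one] at this
  have hLa : L ^ (1 - a) ≤ X ^ (1 / b * (1 - a)) := by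
    rw [Real.rpow_mul hX0.le]; exact Real.rpow_le_rpow hL0.le hLX' (by linarith)
  rw [Real.rpow_zero] at A6
  rw [Real.rpow_one] at A5
  refine ⟨?_, by linarith, by linarith, ?_⟩
  · have : (16 * 2 ^ K * 4) * L ≤ (16 * 2 ^ K * 4) * X ^ (1 / b) := by gcongr
    linarith
  have hYX : c * X ^ (-e) ≤ Y ^ (-(2 * a - 1 + ε)) := by
    have : (10 * X ^ b) ^ (-(2 * a - 1 + ε)) ≤ Y ^ (-(2 * a - 1 + ε)) :=
      Real.rpow_le_rpow_of_nonpos hY0 hY (by linarith)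
    rw [Real.mul_rpow (by norm_num) (by positivity), ← Real.rpow_mul hX0.le] at this
    rwa [he, ← mul_neg]
  refine le_trans ?_ hYX
  have key : ∀ C P : ℝ, 4 / c * C * P ≤ X ^ (-e) → C * P ≤ c * X ^ (-e) / 4 := by
    intro C P h
    have : C * P = c / 4 * (4 / c * C * P) := by field_simp
    rw [this]
    calc c / 4 * (4 / c * C * P) ≤ c / 4 * X ^ (-e) := by gcongr
      _ = _ := by ring
  have B1 := key _ _ A1
  have B2 := key _ _ A2
  have B3 := key _ _ A3
  have B4 := key _ _ A4
  have C1 : 240 * (2 ^ K * (4 * L)) * (X ^ (-a)) ^ 2 ≤ 960 * 2 ^ K * X ^ (1 / b - 2 * a) := by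
    have : X ^ (1 / b - 2 * a) = X ^ (1 / b) * (X ^ (-a)) ^ 2 := by
      rw [pow_two, ← Real.rpow_add hX0, ← Real.rpow_add hX0]; congr 1; ring
    rw [this]
    calc _ = 960 * 2 ^ K * (L * (X ^ (-a)) ^ 2) := by ring
      _ ≤ _ := by gcongr
  have C2 : 8 * (32 * L ^ (1 - a)) * X ^ (-a) ≤ 256 * X ^ ((1 - a) / b - a) := by
    have : X ^ ((1 - a) / b - a) = X ^ (1 / b * (1 - a)) * X ^ (-a) := by
      rw [← Real.rpow_add hX0]; congr 1; ring
    rw [this]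
    calc _ = 256 * (L ^ (1 - a) * X ^ (-a)) := by ring
      _ ≤ _ := by gcongr
  have C3 : 16 * ν * X ^ (γ - 1) * X ^ (-a) = 16 * ν * X ^ (γ - 1 - a) := by
    rw [mul_assoc (16 * ν), ← Real.rpow_add hX0]; congr 2
  have C4 : 2 * X ^ (-(2 * a - 1)) * (3 * X ^ (-ε) * (2 * (3 * X ^ (-ε))) ^ K)
      = 2 * 3 * 6 ^ K * X ^ (-(2 * a - 1) - (K + 1) * ε) := by
    have : X ^ (-(2 * a - 1) - (K + 1) * ε) = X ^ (-(2 * a - 1)) * (X ^ (-ε) * (X ^ (-ε)) ^ K) := by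
      rw [← Real.rpow_natCast (X ^ (-ε)), ← Real.rpow_mul hX0.le, ← Real.rpow_add hX0, ← Real.rpow_add hX0]
      congr 1; ring
    rw [this, ← mul_assoc 2 3, mul_pow]; norm_num; ring
  linarith

/-- frequency sequence -/
def frq (b : ℝ) (n0 : ℕ) : ℕ → ℕ
  | 0 => n0
  | n + 1 => ⌈(5 * (frq b n0 n : ℝ)) ^ b⌉₊

def lamS (b : ℝ) (n0 n : ℕ) : ℝ := 5 * (frq b n0 n : ℝ)

lemma lamS_succ_ge (b : ℝ) (n0 n : ℕ) : 5 * (lamS b n0 n) ^ b ≤ lamS b n0 (n + 1) := by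
  have := Nat.le_ceil ((5 * (frq b n0 n : ℝ)) ^ b)
  simp only [lamS, frq]; linarith

lemma lamS_succ_le (b : ℝ) (hb : 1 < b) (n0 n : ℕ) (h : 1 ≤ lamS b n0 n) :
    lamS b n0 (n + 1) ≤ 10 * (lamS b n0 n) ^ b := by
  have h0 : (1 : ℝ) ≤ (lamS b n0 n) ^ b := Real.one_le_rpow h (by linarith)
  have := (Nat.ceil_lt_add_one (a := (5 * (frq b n0 n : ℝ)) ^ b) (by positivity)).le
  simp only [lamS, frq] at h0 ⊢; linarith

lemma lamS_ge (b : ℝ) (hb : 1 < b) (n0 : ℕ) (hn : 1 ≤ n0) (n : ℕ) :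
    5 * (n0 : ℝ) * 5 ^ n ≤ lamS b n0 n := by
  have h1 : (1 : ℝ) ≤ n0 := by exact_mod_cast hn
  induction n with
  | zero => simp [lamS, frq]
  | succ n ih =>
    have h5 : (1 : ℝ) ≤ 5 ^ n := one_le_pow₀ (by norm_num)
    have h2 : 1 ≤ lamS b n0 n := by nlinarith
    have h3 := lamS_succ_ge b n0 n
    have h4 : (lamS b n0 n) ^ (1 : ℝ) ≤ (lamS b n0 n) ^ b :=
      Real.rpow_le_rpow_of_exponent_le h2 hb.le
    rw [Real.rpow_one] at h4
    rw [pow_succ]; linarith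

lemma dep_iter {X : Type*} [AddCommMonoid X] (Inv : ℕ → X → Prop) (P : ℕ → X → Prop)
    (h0 : Inv 0 0) (hs : ∀ n f, Inv n f → ∃ w, P n w ∧ Inv (n + 1) (f + w)) :
    ∃ w : ℕ → X, ∀ n, P n (w n) ∧ Inv n (∑ i ∈ Finset.range n, w i) := by
  choose! W hW using hs
  let F : ℕ → X := fun n => Nat.rec 0 (fun n f => f + W n f) n
  have hF : ∀ n, Inv n (F n) := by
    intro n
    induction n with
    | zero => exact h0
    | succ n ih => exact (hW n _ ih).2
  have hFs : ∀ n, F n = ∑ i ∈ Finset.range n, W i (F i) := by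
    intro n
    induction n with
    | zero => rfl
    | succ n ih => rw [Finset.sum_range_succ, ← ih]
  refine ⟨fun n => W n (F n), fun n => ⟨(hW n _ (hF n)).1, ?_⟩⟩
  rw [← hFs]; exact hF n

lemma exists_iter (ν γ α : ℝ) (hν : 0 ≤ ν) (hγ1 : 0 < γ) (hγ2 : γ < 3 / 2)
    (hα1 : 1 / 2 ≤ α) (hα2 : α < 1 / 2 + min (1 / 6) (3 / 2 - γ)) (M : ℝ) :
    ∃ (a : ℝ) (l : ℕ → ℝ) (w : ℕ → TP) (k0 : Z2), α < a ∧ a < 1 ∧ (∀ n, M ≤ l n) ∧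
      (∀ n, 5 ^ n ≤ l n) ∧ (∀ n, EvenTP (w n)) ∧
      (∀ n k, w n k ≠ 0 → l n / 2 ≤ knorm k ∧ knorm k ≤ 2 * l n) ∧
      (∀ n, NN (w n) ≤ 8 * l n ^ (-a)) ∧ w 0 k0 ≠ 0 ∧ (∀ n, 1 ≤ n → w n k0 = 0) ∧
      Tendsto (fun n => NN (res ν γ (∑ i ∈ Finset.range n, w i))) atTop (nhds 0) := by
  obtain ⟨a, b, ε, K, X0, h1, h2, h3, h4, h5, hP⟩ := exists_params ν γ α hν hγ2 hα1 hα2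
  obtain ⟨n0, hn0⟩ := exists_nat_ge (max (max X0 M) 1)
  have hX0 : X0 ≤ n0 := (le_max_left _ _).trans ((le_max_left _ _).trans hn0)
  have hM : M ≤ n0 := (le_max_right _ _).trans ((le_max_left _ _).trans hn0)
  have hn1 : (1 : ℝ) ≤ n0 := (le_max_right _ _).trans hn0
  have hn1' : 1 ≤ n0 := by exact_mod_cast hn1
  set lam := lamS b n0 with hlam
  have hge : ∀ n, 5 * (n0 : ℝ) * 5 ^ n ≤ lam n := lamS_ge b h4 n0 hn1'
  have hge0 : ∀ n, (n0 : ℝ) ≤ lam n := fun n => by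
    have : (1 : ℝ) ≤ 5 ^ n := one_le_pow₀ (by norm_num)
    nlinarith [hge n]
  have hge1 : ∀ n, 1 ≤ lam n := fun n => hn1.trans (hge0 n)
  have hge5 : ∀ n : ℕ, (5 : ℝ) ^ n ≤ lam n := fun n => by
    have : (1 : ℝ) ≤ 5 ^ n := one_le_pow₀ (by norm_num)
    nlinarith [hge n]
  have hsge : ∀ n, 5 * lam n ≤ lam (n + 1) := fun n => by
    have h3 := lamS_succ_ge b n0 n
    have h4 : (lamS b n0 n) ^ (1 : ℝ) ≤ (lamS b n0 n) ^ b :=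
      Real.rpow_le_rpow_of_exponent_le (hge1 n) h4.le
    rw [Real.rpow_one] at h4
    linarith
  have hPn : ∀ n, _ := fun n => hP (lam (n + 1)) (hX0.trans (hge0 _)) (lam n) (hge1 n)
    (by have := lamS_succ_ge b n0 n
        have h0 : 0 ≤ (lamS b n0 n) ^ b := Real.rpow_nonneg (by linarith [hge1 n]) _
        linarith) (lam (n + 2)) (by linarith [hge1 (n + 2)]) (lamS_succ_le b h4 n0 (n + 1) (hge1 _))
  let Inv : ℕ → TP → Prop := fun n f => EvenTP f ∧ f 0 = 0 ∧ InB (2 * lam n) f ∧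
    WN knorm f ≤ 32 * lam n ^ (1 - a) ∧ NN (res ν γ f) ≤ lam (n + 1) ^ (-(2 * a - 1 + ε))
  let P : ℕ → TP → Prop := fun n w => EvenTP w ∧
    (∀ k, w k ≠ 0 → |knorm k - lam (n + 1)| ≤ lam (n + 1) / 16) ∧
    NN w ≤ 8 * lam (n + 1) ^ (-a) ∧ w (kap (frq b n0 (n + 1)) true) ≠ 0
  have hstep : ∀ n f, Inv n f → ∃ w, P n w ∧ Inv (n + 1) (f + w) := by
    rintro n f ⟨i1, i2, i3, i4, i5⟩
    obtain ⟨p1, p2, p3, p4⟩ := hPn n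
    set X := lam (n + 1) with hX
    have hX1 : 1 ≤ X := hge1 _
    have hX0 : 0 < X := by linarith
    have hfr : 0 < frq b n0 (n + 1) := by
      have : X = 5 * (frq b n0 (n + 1) : ℝ) := rfl
      rcases Nat.eq_zero_or_pos (frq b n0 (n + 1)) with h | h
      · rw [h] at this; simp at this; linarith
      · exact h
    have ht : X ^ (-a) = Real.sqrt (X ^ (-(2 * a - 1)) / X) := by
      symm
      rw [Real.sqrt_eq_iff_mul_self_eq_of_pos (by positivity), ← Real.rpow_add hX0]
      rw [div_eq_mul_inv, ← Real.rpow_neg_one X, ← Real.rpow_add hX0]; congr 1; ring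
    obtain ⟨w, w1, w2, w3, w4, w5⟩ := step K ν γ hν hγ1 hγ2 f i1 i2 (lam n) (by linarith [hge1 n]) i3
      (frq b n0 (n + 1)) hfr (2 ^ K * (4 * lam n)) X rfl rfl p1 (X ^ (-(2 * a - 1))) (3 * X ^ (-ε))
      (X ^ (-a)) (by positivity) ht p2 (by
        rw [div_le_iff₀ (by positivity), mul_assoc, ← Real.rpow_add hX0]
        have : -ε + -(2 * a - 1) = -(2 * a - 1 + ε) := by ring
        rw [this]; linarith)
    have hmu : 2 ^ K * (4 * lam n) ≤ X / 16 := by linarith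
    have hwk : ∀ k, w k ≠ 0 → knorm k ≤ 2 * X := fun k hk => by
      have := abs_le.1 (w2 k hk); linarith
    refine ⟨w, ⟨w1, fun k hk => (w2 k hk).trans hmu, w3, w4⟩, i1.add w1, ?_, ?_, ?_, ?_⟩
    · rw [Finsupp.add_apply, i2, zero_add]
      by_contra h
      have := abs_le.1 (w2 0 h)
      rw [knorm_zero] at this; linarith
    · exact (i3.mono (by linarith [hsge n, hge1 n])).add hwk
    · have e1 := WN_add_le knorm knorm_nonneg f w
      have e2 := WN_le_of_supp knorm (2 * X) w hwk
      have e3 : 2 * X * NN w ≤ 2 * X * (8 * X ^ (-a)) := by gcongr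
      have e4 : X ^ (1 - a) = X * X ^ (-a) := by
        rw [sub_eq_add_neg, Real.rpow_add hX0, Real.rpow_one]
      linarith
    · refine w5.trans (le_trans ?_ p4)
      gcongr
  have hStart : Inv 0 0 := by
    refine ⟨fun k => by simp, by simp, fun k hk => by simp at hk, ?_, ?_⟩
    · have : WN knorm (0 : TP) = 0 := by simp [WN]
      rw [this]; have := hge1 0; positivity
    · have : res ν γ (0 : TP) = 0 := by simp [res]
      rw [this]; have := hge1 (0 + 1)
      have : NN (0 : TP) = 0 := by simp [NN, WN]
      rw [this]; positivity
  obtain ⟨w, hw⟩ := dep_iter Inv P hStart hstep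
  have hmono : ∀ n, lam 1 ≤ lam (n + 1) := by
    intro n
    induction n with
    | zero => exact le_rfl
    | succ n ih => linarith [hsge (n + 1), hge1 (n + 1)]
  refine ⟨a, fun n => lam (n + 1), w, kap (frq b n0 1) true, h1, h3, fun n => hM.trans (hge0 _), ?_,
    fun n => (hw n).1.1, ?_, fun n => (hw n).1.2.2.1, (hw 0).1.2.2.2, ?_, ?_⟩
  · intro n
    linarith [hsge n, hge5 n, hge1 n]
  · intro n k hk
    have := abs_le.1 ((hw n).1.2.1 k hk)
    have := hge1 (n + 1)
    constructor <;> linarith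
  · intro n hn
    by_contra h
    have := abs_le.1 ((hw n).1.2.1 _ h)
    rw [knorm_kap] at this
    obtain ⟨m, rfl⟩ : ∃ m, n = m + 1 := ⟨n - 1, by omega⟩
    have e1 := hsge (m + 1)
    have e2 := hmono m
    have e3 : lam 1 = 5 * (frq b n0 1 : ℝ) := rfl
    have := hge1 1
    linarith
  · have hl : Tendsto (fun n : ℕ => lam (n + 1)) atTop atTop := by
      refine tendsto_atTop_mono (fun n => hge5 (n + 1)) ?_
      exact (tendsto_pow_atTop_atTop_of_one_lt (by norm_num)).comp (tendsto_add_atTop_nat 1)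
    have hz := (tendsto_rpow_neg_atTop (y := 2 * a - 1 + ε) (by linarith)).comp hl
    exact squeeze_zero (fun n => NN_nonneg _) (fun n => (hw n).2.2.2.2.2) hz

lemma sqrt_knorm_le (α : ℝ) (hα : 1 / 2 ≤ α) (k : Z2) : Real.sqrt (knorm k) ≤ knorm k ^ α := by
  by_cases hk : k = 0
  · subst hk; simp only [knorm_zero, Real.sqrt_zero]; positivity
  · rw [Real.sqrt_eq_rpow]
    exact Real.rpow_le_rpow_of_exponent_le (one_le_knorm hk) hα

lemma exists_limit (ν γ α : ℝ) (hν : 0 ≤ ν) (hγ1 : 0 < γ) (hγ2 : γ < 3 / 2)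
    (hα1 : 1 / 2 ≤ α) (hα2 : α < 1 / 2 + min (1 / 6) (3 / 2 - γ)) (M : ℝ) :
    ∃ (f : Z2 → ℝ) (k0 : Z2), f k0 ≠ 0 ∧ (∀ k, f (-k) = f k) ∧ (∀ k, 2 * knorm k < M → f k = 0) ∧
      Summable (fun k => knorm k ^ α * |f k|) ∧
      ∀ m, ∑' k, Qs k (m - k) * f k * f (m - k) + ν * knorm m ^ (γ - 1) * f m = 0 := by
  obtain ⟨a, l, w, k0, ha1, ha2, hM, h5, hev, hsupp, hN, hk0, hk1, hres⟩ :=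
    exists_iter ν γ α hν hγ1 hγ2 hα1 hα2 M
  have hl1 : ∀ n, 1 ≤ l n := fun n => (one_le_pow₀ (by norm_num)).trans (h5 n)
  have ha0 : 0 < a := by linarith
  have hgeo : ∀ s : ℝ, 0 < s → (∀ n, l n ^ (-s) ≤ ((5 : ℝ) ^ (-s)) ^ n) ∧
      Summable (fun n : ℕ => ((5 : ℝ) ^ (-s)) ^ n) := by
    intro s hs
    refine ⟨fun n => ?_, summable_geometric_of_lt_one (by positivity)
      (Real.rpow_lt_one_of_one_lt_of_neg (by norm_num) (by linarith))⟩
    rw [← Real.rpow_natCast, ← Real.rpow_mul (by norm_num), mul_comm, Real.rpow_mul (by norm_num),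
      Real.rpow_natCast]
    exact Real.rpow_le_rpow_of_nonpos (by positivity) (h5 n) (by linarith)
  have hsk : ∀ k, Summable (fun n => |w n k|) := by
    intro k
    refine Summable.of_nonneg_of_le (fun n => abs_nonneg _) (fun n => ?_) ((hgeo a ha0).2.mul_left 8)
    exact ((abs_apply_le_NN _ _).trans (hN n)).trans (by gcongr; exact (hgeo a ha0).1 n)
  have hWN : ∀ n, ∑' k, knorm k ^ α * |w n k| ≤ 16 * ((5 : ℝ) ^ (-(a - α))) ^ n := by
    intro n
    have e0 : ∑' k, knorm k ^ α * |w n k| = WN (fun k => knorm k ^ α) (w n) := by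
      rw [WN_eq _ (w n) _ subset_rfl, tsum_eq_sum]
      intro k hk; rw [Finsupp.notMem_support_iff.1 hk]; simp
    rw [e0]
    have hl0 : 0 < l n := by linarith [hl1 n]
    have e1 := WN_le_of_supp (fun k => knorm k ^ α) (2 * l n ^ α) (w n) (fun k hk => by
      have h1 := (hsupp n k hk).2
      calc knorm k ^ α ≤ (2 * l n) ^ α := Real.rpow_le_rpow (knorm_nonneg k) h1 (by linarith)
        _ = 2 ^ α * l n ^ α := Real.mul_rpow (by norm_num) hl0.le
        _ ≤ 2 ^ (1 : ℝ) * l n ^ α := by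
          gcongr
          · norm_num
          · linarith
        _ = _ := by rw [Real.rpow_one])
    refine e1.trans ?_
    have e2 : 2 * l n ^ α * NN (w n) ≤ 2 * l n ^ α * (8 * l n ^ (-a)) := by gcongr; exact hN n
    refine e2.trans ?_
    have e3 := (hgeo (a - α) (by linarith)).1 n
    have e4 : l n ^ (-(a - α)) = l n ^ α * l n ^ (-a) := by
      rw [← Real.rpow_add hl0]; congr 1; ring
    linarith
  have hprod : Summable (fun p : ℕ × Z2 => knorm p.2 ^ α * |w p.1 p.2|) := by
    rw [summable_prod_of_nonneg (fun p => mul_nonneg (Real.rpow_nonneg (knorm_nonneg _) _) (abs_nonneg _))]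
    refine ⟨fun n => ?_, ?_⟩
    · refine summable_of_ne_finset_zero (s := (w n).support) ?_
      intro k hk; rw [Finsupp.notMem_support_iff.1 hk]; simp
    · refine Summable.of_nonneg_of_le (fun n => tsum_nonneg fun k =>
        mul_nonneg (Real.rpow_nonneg (knorm_nonneg _) _) (abs_nonneg _)) hWN
        ((hgeo (a - α) (by linarith)).2.mul_left 16)
  set G : Z2 → ℝ := fun k => ∑' n, |w n k| with hG
  have hG0 : ∀ k, 0 ≤ G k := fun k => tsum_nonneg fun n => abs_nonneg _
  have hGs : Summable (fun k => knorm k ^ α * G k) := by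
    have := ((Equiv.prodComm Z2 ℕ).summable_iff.2 hprod).prod
    refine this.congr fun k => ?_
    simp only [Function.comp, Equiv.prodComm_apply, Prod.swap, hG]
    rw [tsum_mul_left]
  set f : Z2 → ℝ := fun k => ∑' n, w n k with hf
  have hwk : ∀ k, Summable (fun n => w n k) := fun k => (hsk k).of_abs
  have hfG : ∀ k, |f k| ≤ G k := fun k => by
    have := norm_tsum_le_tsum_norm (f := fun n => w n k) (by simpa using hsk k)
    simpa using this
  set F : ℕ → TP := fun n => ∑ i ∈ Finset.range n, w i with hF
  have hFk : ∀ n k, F n k = ∑ i ∈ Finset.range n, w i k := fun n k => by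
    simp [hF, Finsupp.finsetSum_apply]
  have hFt : ∀ k, Tendsto (fun n => F n k) atTop (nhds (f k)) := fun k => by
    simp only [hFk]; exact (hwk k).hasSum.tendsto_sum_nat
  have hFG : ∀ n k, |F n k| ≤ G k := fun n k => by
    rw [hFk]
    exact (Finset.abs_sum_le_sum_abs _ _).trans ((hsk k).sum_le_tsum _ (fun _ _ => abs_nonneg _))
  refine ⟨f, k0, ?_, ?_, ?_, ?_, ?_⟩
  · have : f k0 = w 0 k0 := tsum_eq_single 0 (fun n hn => hk1 n (by omega))
    rwa [this]
  · intro k; simp only [hf]; congr 1; ext n; exact hev n k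
  · intro k hk
    have : ∀ n, w n k = 0 := fun n => by
      by_contra h
      have := (hsupp n k h).1
      linarith [hM n]
    simp [hf, this]
  · refine Summable.of_nonneg_of_le (fun k => mul_nonneg (Real.rpow_nonneg (knorm_nonneg _) _) (abs_nonneg _))
      (fun k => ?_) hGs
    exact mul_le_mul_of_nonneg_left (hfG k) (Real.rpow_nonneg (knorm_nonneg _) _)
  · intro m
    set A : Z2 → ℝ := fun k => knorm k ^ α * G k with hA
    have hA0 : ∀ k, 0 ≤ A k := fun k => mul_nonneg (Real.rpow_nonneg (knorm_nonneg _) _) (hG0 k)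
    have hlim : Tendsto (fun n => ∑' k, Qs k (m - k) * F n k * F n (m - k)) atTop
        (nhds (∑' k, Qs k (m - k) * f k * f (m - k))) := by
      refine tendsto_tsum_of_dominated_convergence (bound := fun k => A k * ∑' k, A k)
        (hGs.mul_right _) (fun k => ?_) (Eventually.of_forall fun n k => ?_)
      · exact ((hFt k).const_mul _).mul (hFt (m - k))
      · have hs : A (m - k) ≤ ∑' k, A k := hGs.le_tsum _ (fun j _ => hA0 j)
        rw [Real.norm_eq_abs, abs_mul, abs_mul]
        have q1 := abs_Qs_le_sqrt k (m - k)
        have q2 := sqrt_knorm_le α hα1 k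
        have q3 := sqrt_knorm_le α hα1 (m - k)
        have q4 : |Qs k (m - k)| ≤ knorm k ^ α * knorm (m - k) ^ α := q1.trans (mul_le_mul q2 q3 (Real.sqrt_nonneg _) (Real.rpow_nonneg (knorm_nonneg k) α))
        calc |Qs k (m - k)| * |F n k| * |F n (m - k)|
            ≤ (knorm k ^ α * knorm (m - k) ^ α) * G k * G (m - k) := by
              have := hG0 k
              have := hG0 (m - k)
              have := Real.rpow_nonneg (knorm_nonneg k) α
              have := Real.rpow_nonneg (knorm_nonneg (m - k)) α
              gcongr
              · exact hFG n k
              · exact hFG n _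
          _ = A k * A (m - k) := by simp only [hA]; ring
          _ ≤ _ := mul_le_mul_of_nonneg_left hs (hA0 k)
    have hlim2 := hlim.add ((hFt m).const_mul (ν * knorm m ^ (γ - 1)))
    have hz : Tendsto (fun n => res ν γ (F n) m) atTop (nhds 0) := by
      refine squeeze_zero_norm (fun n => ?_) hres
      rw [Real.norm_eq_abs]; exact abs_apply_le_NN _ _
    refine tendsto_nhds_unique hlim2 (hz.congr fun n => ?_)
    simp only [res, Finsupp.add_apply, mulOp_apply, bil_apply_tsum]

def ek (k : Z2) (x : ℝ × ℝ) : ℂ := Complex.exp (Complex.I * (dotZ k x : ℝ))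

lemma norm_ek (k : Z2) (x : ℝ × ℝ) : ‖ek k x‖ = 1 := by
  rw [ek, mul_comm]; exact Complex.norm_exp_ofReal_mul_I _

lemma ek_add (k m : Z2) (x : ℝ × ℝ) : ek (k + m) x = ek k x * ek m x := by
  simp only [ek, ← Complex.exp_add, dotZ, Prod.fst_add, Prod.snd_add]
  congr 1; push_cast; ring

lemma ek_neg (k : Z2) (x : ℝ × ℝ) : ek (-k) x = Complex.exp (-Complex.I * (dotZ k x : ℝ)) := by
  simp only [ek, dotZ, Prod.fst_neg, Prod.snd_neg]
  congr 1; push_cast; ring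

lemma continuous_ek (k : Z2) : Continuous (ek k) := by
  unfold ek dotZ; fun_prop

lemma conj_ek (k : Z2) (x : ℝ × ℝ) : (starRingEnd ℂ) (ek k x) = ek (-k) x := by
  rw [ek_neg, ek, ← Complex.exp_conj]; simp

lemma exp_int_two_pi (n : ℤ) (z : ℂ) : Complex.exp (z + (n : ℂ) * (2 * Real.pi * Complex.I)) = Complex.exp z := by
  rw [Complex.exp_add, Complex.exp_int_mul_two_pi_mul_I, mul_one]

lemma periodic_ek (k : Z2) : Periodic2 (ek k) := by
  intro x
  constructor
  · rw [ek, ek, ← exp_int_two_pi k.1 (Complex.I * (dotZ k x : ℝ))]; congr 1; simp only [dotZ]; push_cast; ring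
  · rw [ek, ek, ← exp_int_two_pi k.2 (Complex.I * (dotZ k x : ℝ))]; congr 1; simp only [dotZ]; push_cast; ring

lemma int_exp (n : ℤ) : ∫ x in Set.Icc (-Real.pi) Real.pi, Complex.exp (Complex.I * n * x)
    = if n = 0 then (2 * Real.pi : ℂ) else 0 := by
  rw [integral_Icc_eq_integral_Ioc, ← intervalIntegral.integral_of_le (by linarith [Real.pi_pos])]
  split_ifs with h
  · subst h; simp; ring
  · rw [integral_exp_mul_complex (by simp [h])]
    have : Complex.exp (Complex.I * n * (Real.pi : ℝ)) = Complex.exp (Complex.I * n * ((-Real.pi : ℝ) : ℂ)) := by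
      rw [← exp_int_two_pi n (Complex.I * n * ((-Real.pi : ℝ) : ℂ))]; congr 1; push_cast; ring
    rw [this]; simp

lemma Q2_eq : Q2 = Set.Icc (-Real.pi) Real.pi ×ˢ Set.Icc (-Real.pi) Real.pi := by
  rw [Q2, Set.Icc_prod_Icc]

lemma int_ek (k : Z2) : ∫ x in Q2, ek k x = if k = 0 then ((2 * Real.pi) ^ 2 : ℂ) else 0 := by
  have h : ∀ x : ℝ × ℝ, ek k x = Complex.exp (Complex.I * k.1 * x.1) * Complex.exp (Complex.I * k.2 * x.2) := by
    intro x; rw [ek, ← Complex.exp_add]; congr 1; simp only [dotZ]; push_cast; ring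
  simp only [h]
  rw [Q2_eq, Measure.volume_eq_prod,
    setIntegral_prod_mul (fun x : ℝ => Complex.exp (Complex.I * k.1 * x)) (fun x : ℝ => Complex.exp (Complex.I * k.2 * x)),
    int_exp, int_exp]
  obtain ⟨a, b⟩ := k
  by_cases ha : a = 0 <;> by_cases hb : b = 0 <;> simp [ha, hb, sq]

lemma isCompact_Q2 : IsCompact Q2 := by rw [Q2_eq]; exact isCompact_Icc.prod isCompact_Icc

lemma vol_Q2_lt : volume Q2 < ⊤ := isCompact_Q2.measure_lt_top

/-- the function with Fourier coefficients `f` -/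
def gF (f : Z2 → ℝ) (x : ℝ × ℝ) : ℂ := ∑' k, (f k : ℂ) * ek k x

lemma norm_term (f : Z2 → ℝ) (k : Z2) (x : ℝ × ℝ) : ‖(f k : ℂ) * ek k x‖ = |f k| := by
  rw [norm_mul, norm_ek, mul_one, Complex.norm_real, Real.norm_eq_abs]

lemma summable_term (f : Z2 → ℝ) (hf : Summable fun k => |f k|) (x : ℝ × ℝ) :
    Summable fun k => (f k : ℂ) * ek k x := by
  apply Summable.of_norm; simpa only [norm_term] using hf

lemma continuous_gF (f : Z2 → ℝ) (hf : Summable fun k => |f k|) : Continuous (gF f) :=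
  continuous_tsum (fun k => continuous_const.mul (continuous_ek k)) hf (fun k x => (norm_term f k x).le)

lemma periodic_gF (f : Z2 → ℝ) : Periodic2 (gF f) := by
  intro x
  simp only [gF]
  exact ⟨tsum_congr fun k => by rw [(periodic_ek k x).1], tsum_congr fun k => by rw [(periodic_ek k x).2]⟩

lemma real_gF (f : Z2 → ℝ) (he : ∀ k, f (-k) = f k) : RealValued (gF f) := by
  intro x
  rw [← Complex.conj_eq_iff_im, gF, Complex.conj_tsum, ← (Equiv.neg Z2).tsum_eq]
  refine tsum_congr fun k => ?_
  simp [he, conj_ek]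

lemma fCoeff_gF (f : Z2 → ℝ) (hf : Summable fun k => |f k|) (k : Z2) : fCoeff (gF f) k = f k := by
  have hpi : (Real.pi : ℂ) ≠ 0 := by exact_mod_cast Real.pi_ne_zero
  have h1 : ∀ x, gF f x * Complex.exp (-Complex.I * (dotZ k x : ℝ)) = ∑' j, (f j : ℂ) * ek (j - k) x := by
    intro x
    rw [← ek_neg, gF, ← tsum_mul_right]
    refine tsum_congr fun j => ?_
    rw [sub_eq_add_neg, ek_add]; ring
  have hIntg : ∀ j, Integrable (fun x => (f j : ℂ) * ek (j - k) x) (volume.restrict Q2) := fun j =>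
    (continuous_const.mul (continuous_ek _)).continuousOn.integrableOn_compact isCompact_Q2
  have hn : ∀ j, ∫ x in Q2, ‖(f j : ℂ) * ek (j - k) x‖ = volume.real Q2 * |f j| := by
    intro j
    have : ∀ x, ‖(f j : ℂ) * ek (j - k) x‖ = |f j| := fun x => by
      rw [norm_mul, norm_ek, mul_one, Complex.norm_real, Real.norm_eq_abs]
    simp only [this]
    rw [setIntegral_const, smul_eq_mul]
  rw [fCoeff]
  simp only [h1]
  rw [← integral_tsum_of_summable_integral_norm hIntg (by simp only [hn]; exact hf.mul_left _)]
  have h2 : ∀ j, ∫ x in Q2, (f j : ℂ) * ek (j - k) x = if j = k then (f k : ℂ) * (2 * Real.pi) ^ 2 else 0 := by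
    intro j
    rw [integral_const_mul, int_ek]
    by_cases h : j = k
    · subst h; simp
    · simp [h, sub_eq_zero]
  simp only [h2, tsum_ite_eq]
  field_simp

lemma min_two_le (d α : ℝ) (hd : 0 ≤ d) (hα0 : 0 ≤ α) (hα : α ≤ 1) : min 2 d ≤ 2 * d ^ α := by
  rcases le_total d 1 with h | h
  · refine (min_le_right _ _).trans ?_
    have : d ^ (1 : ℝ) ≤ d ^ α := by
      rcases hd.eq_or_lt with h0 | h0
      · subst h0; rw [Real.rpow_one]; positivity
      · exact Real.rpow_le_rpow_of_exponent_ge h0 h hα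
    rw [Real.rpow_one] at this
    have : 0 ≤ d ^ α := by positivity
    linarith
  · refine (min_le_left _ _).trans ?_
    have := Real.one_le_rpow h hα0
    linarith

lemma ek_sub_le (k : Z2) (x y : ℝ × ℝ) (α : ℝ) (hα0 : 0 ≤ α) (hα : α ≤ 1) :
    ‖ek k x - ek k y‖ ≤ 4 * knorm k ^ α * dist x y ^ α := by
  have h1 : ek k x - ek k y = ek k y * (Complex.exp (Complex.I * ((dotZ k x - dotZ k y : ℝ) : ℂ)) - 1) := by
    rw [mul_sub, ek, ek, ← Complex.exp_add, mul_one]; congr 2; push_cast; ring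
  have h2 : ‖ek k x - ek k y‖ ≤ |dotZ k x - dotZ k y| := by
    rw [h1, norm_mul, norm_ek, one_mul]
    exact Real.norm_exp_I_mul_ofReal_sub_one_le
  have h3 : ‖ek k x - ek k y‖ ≤ 2 := by
    refine (norm_sub_le _ _).trans ?_
    rw [norm_ek, norm_ek]; norm_num
  have h4 : |dotZ k x - dotZ k y| ≤ 2 * (knorm k * dist x y) := by
    have e : dotZ k x - dotZ k y = k.1 * (x.1 - y.1) + k.2 * (x.2 - y.2) := by simp only [dotZ]; ring
    have a1 : |(k.1 : ℝ)| ≤ knorm k := Real.abs_le_sqrt (by nlinarith [sq_nonneg (k.2 : ℝ)])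
    have a2 : |(k.2 : ℝ)| ≤ knorm k := Real.abs_le_sqrt (by nlinarith [sq_nonneg (k.1 : ℝ)])
    have b1 : |x.1 - y.1| ≤ dist x y := by rw [Prod.dist_eq, ← Real.dist_eq]; exact le_max_left _ _
    have b2 : |x.2 - y.2| ≤ dist x y := by rw [Prod.dist_eq, ← Real.dist_eq]; exact le_max_right _ _
    have hk := knorm_nonneg k
    rw [e]
    refine (abs_add_le _ _).trans ?_
    rw [abs_mul, abs_mul]
    have c1 := mul_le_mul a1 b1 (abs_nonneg _) hk
    have c2 := mul_le_mul a2 b2 (abs_nonneg _) hk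
    linarith
  have hk := knorm_nonneg k
  have h5 : ‖ek k x - ek k y‖ ≤ 2 * (2 * (knorm k * dist x y)) ^ α :=
    (le_min h3 (h2.trans h4)).trans (min_two_le _ α (by positivity) hα0 hα)
  refine h5.trans ?_
  rw [Real.mul_rpow (by norm_num) (by positivity), Real.mul_rpow hk dist_nonneg]
  have h6 : (2 : ℝ) ^ α ≤ 2 := by
    calc (2 : ℝ) ^ α ≤ 2 ^ (1 : ℝ) := Real.rpow_le_rpow_of_exponent_le (by norm_num) hα
      _ = 2 := Real.rpow_one 2
  have : 0 ≤ knorm k ^ α * dist x y ^ α := by positivity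
  nlinarith

lemma holder_gF (f : Z2 → ℝ) (hf : Summable fun k => |f k|) (α : ℝ) (hα0 : 0 ≤ α) (hα : α ≤ 1)
    (hfα : Summable fun k => knorm k ^ α * |f k|) :
    ∀ x y : ℝ × ℝ, ‖gF f x - gF f y‖ ≤ (4 * ∑' k, knorm k ^ α * |f k|) * dist x y ^ α := by
  intro x y
  rw [gF, gF, ← (summable_term f hf x).tsum_sub (summable_term f hf y)]
  have hs : Summable fun k => (4 * dist x y ^ α) * (knorm k ^ α * |f k|) := hfα.mul_left _
  have := tsum_of_norm_bounded hs.hasSum (f := fun k => (f k : ℂ) * ek k x - (f k : ℂ) * ek k y) (fun k => by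
    rw [← mul_sub, norm_mul, Complex.norm_real, Real.norm_eq_abs]
    have := mul_le_mul_of_nonneg_left (ek_sub_le k x y α hα0 hα) (abs_nonneg (f k))
    linarith)
  rw [tsum_mul_left] at this
  linarith

lemma parts1 (u u' : ℝ → ℂ) (hu : ∀ t, HasDerivAt u (u' t) t) (hc : Continuous u')
    (hp : u (-Real.pi) = u Real.pi) (n : ℤ) :
    ∫ t in (-Real.pi)..Real.pi, u' t * Complex.exp (-Complex.I * n * t)
      = (Complex.I * n) * ∫ t in (-Real.pi)..Real.pi, u t * Complex.exp (-Complex.I * n * t) := by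
  have hcu : Continuous u := continuous_iff_continuousAt.2 fun t => (hu t).continuousAt
  have hE : ∀ t : ℝ, HasDerivAt (fun t : ℝ => Complex.exp (-Complex.I * n * t))
      (Complex.exp (-Complex.I * n * t) * (-Complex.I * n)) t := by
    intro t
    have h1 : HasDerivAt (fun z : ℂ => -Complex.I * n * z) (-Complex.I * n) (t : ℂ) := by
      simpa using (hasDerivAt_id (t : ℂ)).const_mul (-Complex.I * n)
    exact (h1.cexp).comp_ofReal
  have hd : ∀ t, HasDerivAt (fun t => u t * Complex.exp (-Complex.I * n * t))
      (u' t * Complex.exp (-Complex.I * n * t)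
        + u t * (Complex.exp (-Complex.I * n * t) * (-Complex.I * n))) t := fun t => (hu t).mul (hE t)
  have hi1 : IntervalIntegrable (fun t : ℝ => u' t * Complex.exp (-Complex.I * n * t)) volume (-Real.pi) Real.pi :=
    (by fun_prop : Continuous _).intervalIntegrable _ _
  have hi2 : IntervalIntegrable (fun t : ℝ => u t * (Complex.exp (-Complex.I * n * t) * (-Complex.I * n)))
    volume (-Real.pi) Real.pi := (by fun_prop : Continuous _).intervalIntegrable _ _
  have h := intervalIntegral.integral_eq_sub_of_hasDerivAt (fun t _ => hd t) (hi1.add hi2)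
  rw [intervalIntegral.integral_add hi1 hi2] at h
  have hb : Complex.exp (-Complex.I * n * (Real.pi : ℝ)) = Complex.exp (-Complex.I * n * ((-Real.pi : ℝ) : ℂ)) := by
    rw [← exp_int_two_pi n (-Complex.I * n * (Real.pi : ℝ))]; congr 1; push_cast; ring
  rw [hb, hp, sub_self] at h
  have h3 : ∫ t in (-Real.pi)..Real.pi, u t * (Complex.exp (-Complex.I * n * t) * (-Complex.I * n))
      = (-Complex.I * n) * ∫ t in (-Real.pi)..Real.pi, u t * Complex.exp (-Complex.I * n * t) := by
    rw [← intervalIntegral.integral_const_mul]; congr 1; ext t; ring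
  rw [h3] at h
  linear_combination h

lemma parts2 (u u' u'' : ℝ → ℂ) (hu : ∀ t, HasDerivAt u (u' t) t) (hu' : ∀ t, HasDerivAt u' (u'' t) t)
    (hc : Continuous u'') (hp : ∀ t, u (t + 2 * Real.pi) = u t) (n : ℤ) (B : ℝ)
    (hB : ∀ t ∈ Set.Icc (-Real.pi) Real.pi, ‖u'' t‖ ≤ B) :
    (n : ℝ) ^ 2 * ‖∫ t in (-Real.pi)..Real.pi, u t * Complex.exp (-Complex.I * n * t)‖ ≤ B * (2 * Real.pi) := by
  have hpi := Real.pi_pos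
  have hcu' : Continuous u' := continuous_iff_continuousAt.2 fun t => (hu' t).continuousAt
  have hp1 : u (-Real.pi) = u Real.pi := by rw [← hp (-Real.pi)]; congr 1; ring
  have hp2 : u' (-Real.pi) = u' Real.pi := by
    have h1 : HasDerivAt (fun t => u (t + 2 * Real.pi)) (u' (-Real.pi + 2 * Real.pi)) (-Real.pi) :=
      (hu _).comp_add_const _ _
    simp only [hp] at h1
    rw [(hu (-Real.pi)).unique h1]; congr 1; ring
  have e1 := parts1 u u' hu hcu' hp1 n
  have e2 := parts1 u' u'' hu' hc hp2 n
  rw [e1] at e2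
  have e3 : ‖∫ t in (-Real.pi)..Real.pi, u'' t * Complex.exp (-Complex.I * n * t)‖ ≤ B * (2 * Real.pi) := by
    have := intervalIntegral.norm_integral_le_of_norm_le_const (a := -Real.pi) (b := Real.pi) (C := B)
      (f := fun t : ℝ => u'' t * Complex.exp (-Complex.I * n * t)) (fun t ht => by
        rw [Set.uIoc_of_le (by linarith)] at ht
        have : -Complex.I * n * (t : ℂ) = ((-(n * t) : ℝ) : ℂ) * Complex.I := by push_cast; ring
        rw [norm_mul, this, Complex.norm_exp_ofReal_mul_I, mul_one]
        exact hB t ⟨ht.1.le, ht.2⟩)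
    refine this.trans (le_of_eq ?_)
    rw [abs_of_nonneg (by linarith)]; ring
  rw [e2, ← mul_assoc, norm_mul] at e3
  have : ‖Complex.I * (n : ℂ) * (Complex.I * n)‖ = (n : ℝ) ^ 2 := by
    simp [sq]
  rwa [this] at e3

lemma fCoeff_decay1 (ψ : ℝ × ℝ → ℂ) (hψ : ContDiff ℝ (⊤ : ℕ∞) ψ) (hp : Periodic2 ψ) :
    ∃ C, ∀ m : Z2, (m.1 : ℝ) ^ 2 * ‖fCoeff ψ m‖ ≤ C := by
  set e : ℝ × ℝ := (1, 0)
  set D1 : ℝ × ℝ → ℂ := fun x => fderiv ℝ ψ x e with hD1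
  have hD1s : ContDiff ℝ (⊤ : ℕ∞) D1 := (hψ.fderiv_right (m := (⊤ : ℕ∞)) (by simp)).clm_apply contDiff_const
  set D2 : ℝ × ℝ → ℂ := fun x => fderiv ℝ D1 x e with hD2
  have hD2s : ContDiff ℝ (⊤ : ℕ∞) D2 := (hD1s.fderiv_right (m := (⊤ : ℕ∞)) (by simp)).clm_apply contDiff_const
  have hline : ∀ y t : ℝ, HasDerivAt (fun t : ℝ => (t, y)) e t := fun y t =>
    (hasDerivAt_id t).prodMk (hasDerivAt_const t y)
  have hd1 : ∀ y t, HasDerivAt (fun t => ψ (t, y)) (D1 (t, y)) t := fun y t =>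
    ((hψ.differentiable (by simp) (t, y)).hasFDerivAt).comp_hasDerivAt t (hline y t)
  have hd2 : ∀ y t, HasDerivAt (fun t => D1 (t, y)) (D2 (t, y)) t := fun y t => by
    have h : HasFDerivAt D1 (fderiv ℝ D1 (t, y)) (t, y) := (hD1s.differentiable (by simp) (t, y)).hasFDerivAt
    exact HasFDerivAt.comp_hasDerivAt (l := D1) (f := fun t : ℝ => (t, y)) t h (hline y t)
  obtain ⟨B, hB⟩ := isCompact_Q2.exists_bound_of_continuousOn hD2s.continuous.continuousOn
  have hpi := Real.pi_pos
  refine ⟨B, fun m => ?_⟩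
  have hcψ := hψ.continuous
  have hIntg : IntegrableOn (fun z : ℝ × ℝ => ψ z.swap * Complex.exp (-Complex.I * (dotZ m z.swap : ℝ)))
      (Set.Icc (-Real.pi) Real.pi ×ˢ Set.Icc (-Real.pi) Real.pi) (volume.prod volume) := by
    rw [← Measure.volume_eq_prod, ← Q2_eq]
    refine ContinuousOn.integrableOn_compact isCompact_Q2 (Continuous.continuousOn ?_)
    unfold dotZ
    fun_prop
  have hI : ∫ x in Q2, ψ x * Complex.exp (-Complex.I * (dotZ m x : ℝ))
      = ∫ y in Set.Icc (-Real.pi) Real.pi, Complex.exp (-Complex.I * m.2 * y) *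
        ∫ t in (-Real.pi)..Real.pi, ψ (t, y) * Complex.exp (-Complex.I * m.1 * t) := by
    rw [Q2_eq, Measure.volume_eq_prod, ← setIntegral_prod_swap, setIntegral_prod _ hIntg]
    refine integral_congr_ae (Eventually.of_forall fun y => ?_)
    simp only [Prod.swap]
    rw [intervalIntegral.integral_of_le (by linarith), ← integral_Icc_eq_integral_Ioc, ← integral_const_mul]
    congr 1; ext t
    rw [mul_left_comm, ← Complex.exp_add]
    congr 2; simp only [dotZ]; push_cast; ring
  have hbd : ‖∫ x in Q2, ((m.1 : ℝ) ^ 2 : ℂ) * (ψ x * Complex.exp (-Complex.I * (dotZ m x : ℝ)))‖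
      ≤ (B * (2 * Real.pi)) * (2 * Real.pi) := by
    rw [integral_const_mul, hI, ← integral_const_mul]
    have := norm_setIntegral_le_of_norm_le_const (μ := volume) (s := Set.Icc (-Real.pi) Real.pi)
      (C := B * (2 * Real.pi))
      (f := fun y : ℝ => ((m.1 : ℝ) ^ 2 : ℂ) * (Complex.exp (-Complex.I * m.2 * y) *
        ∫ t in (-Real.pi)..Real.pi, ψ (t, y) * Complex.exp (-Complex.I * m.1 * t)))
      (by simp) (fun y hy => by
        have h2 := parts2 (fun t => ψ (t, y)) (fun t => D1 (t, y)) (fun t => D2 (t, y)) (hd1 y) (hd2 y)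
          (hD2s.continuous.comp (by fun_prop)) (fun t => (hp (t, y)).1) m.1 B
          (fun t ht => hB (t, y) (by rw [Q2_eq]; exact ⟨ht, hy⟩))
        have : -Complex.I * m.2 * (y : ℂ) = ((-(m.2 * y) : ℝ) : ℂ) * Complex.I := by push_cast; ring
        rw [norm_mul, norm_mul, this, Complex.norm_exp_ofReal_mul_I, one_mul]
        simpa using h2)
    refine this.trans (le_of_eq ?_)
    rw [Real.volume_real_Icc_of_le (by linarith)]; ring
  rw [integral_const_mul, norm_mul] at hbd
  rw [fCoeff, norm_mul]
  have e1 : ‖((m.1 : ℝ) ^ 2 : ℂ)‖ = (m.1 : ℝ) ^ 2 := by simp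
  have e2 : ‖(1 / (2 * Real.pi) ^ 2 : ℂ)‖ = 1 / (2 * Real.pi) ^ 2 := by
    simp [abs_of_pos hpi]
  rw [e1] at hbd
  rw [e2]
  calc _ = 1 / (2 * Real.pi) ^ 2 * ((m.1 : ℝ) ^ 2 * ‖∫ x in Q2, ψ x * Complex.exp (-Complex.I * (dotZ m x : ℝ))‖) := by ring
    _ ≤ 1 / (2 * Real.pi) ^ 2 * (B * (2 * Real.pi) * (2 * Real.pi)) := by gcongr
    _ = B := by field_simp

lemma fCoeff_swap (ψ : ℝ × ℝ → ℂ) (m : Z2) : fCoeff (fun x => ψ x.swap) m.swap = fCoeff ψ m := by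
  rw [fCoeff, fCoeff, Q2_eq, Measure.volume_eq_prod, ← setIntegral_prod_swap]
  congr 2; ext x; congr 4
  simp only [dotZ, Prod.fst_swap, Prod.snd_swap]; ring

lemma fCoeff_decay (ψ : ℝ × ℝ → ℂ) (hψ : ContDiff ℝ (⊤ : ℕ∞) ψ) (hp : Periodic2 ψ) :
    ∃ C, 0 ≤ C ∧ ∀ m : Z2, knorm m ^ 2 * ‖fCoeff ψ m‖ ≤ C := by
  obtain ⟨C1, h1⟩ := fCoeff_decay1 ψ hψ hp
  obtain ⟨C2, h2⟩ := fCoeff_decay1 (fun x => ψ x.swap) (hψ.comp (contDiff_snd.prodMk contDiff_fst))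
    (fun x => ⟨(hp x.swap).2, (hp x.swap).1⟩)
  have key : ∀ m : Z2, knorm m ^ 2 * ‖fCoeff ψ m‖ ≤ C1 + C2 := by
    intro m
    have a := h1 m
    have b := h2 m.swap
    rw [fCoeff_swap] at b
    rw [knorm_sq, add_mul]
    exact add_le_add a b
  exact ⟨C1 + C2, (by positivity : (0:ℝ) ≤ knorm 0 ^ 2 * ‖fCoeff ψ 0‖).trans (key 0), key⟩

def cF (f : Z2 → ℝ) (k : Z2) : ℂ := ((knorm k * f k : ℝ) : ℂ)

lemma riesz_mul (j : Fin 2) (k : Z2) :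
    rieszSym j k * (knorm k : ℂ) = Complex.I * ((if j = 0 then (k.1 : ℝ) else (k.2 : ℝ)) : ℂ) := by
  unfold rieszSym
  by_cases hk : k = 0
  · subst hk; simp
  · have : (knorm k : ℂ) ≠ 0 := by exact_mod_cast (knorm_pos hk).ne'
    rw [if_neg hk]; field_simp

lemma norm_riesz_le (j : Fin 2) (k : Z2) : ‖rieszSym j k‖ ≤ 1 := by
  by_cases hk : k = 0
  · subst hk; simp [rieszSym]
  · have h0 := knorm_pos hk
    have h := congrArg norm (riesz_mul j k)
    rw [norm_mul, norm_mul, Complex.norm_I, one_mul, Complex.norm_real, Real.norm_eq_abs, abs_of_pos h0] at h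
    have a1 : |(k.1 : ℝ)| ≤ knorm k := Real.abs_le_sqrt (by nlinarith [sq_nonneg (k.2 : ℝ)])
    have a2 : |(k.2 : ℝ)| ≤ knorm k := Real.abs_le_sqrt (by nlinarith [sq_nonneg (k.1 : ℝ)])
    have h2 : ‖rieszSym j k‖ * knorm k ≤ 1 * knorm k := by
      rw [h, one_mul]
      split_ifs
      · rw [Complex.norm_real]; exact a1
      · rw [Complex.norm_real]; exact a2
    exact le_of_mul_le_mul_right h2 h0

lemma Qs_mul (k k' : Z2) : 2 * knorm (k - k') ^ 2 * Qs k (-k') = cross k k' * (knorm k' - knorm k) := by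
  by_cases h : k = k'
  · subst h; simp
  · have h0 : knorm (k - k') ≠ 0 := (knorm_pos (sub_ne_zero.2 h)).ne'
    unfold Qs
    rw [← sub_eq_add_neg, knorm_neg]
    have : cross k (-k') = - cross k k' := by simp [cross]; ring
    rw [this]; field_simp; ring

def Ssym (k k' : Z2) : ℂ :=
  -((rieszSym 1 k - rieszSym 1 k') * (Complex.I * (((k - k').1 : ℝ) : ℂ)))
    + (rieszSym 0 k - rieszSym 0 k') * (Complex.I * (((k - k').2 : ℝ) : ℂ))

lemma Ssym_mul (f : Z2 → ℝ) (k k' : Z2) :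
    cF f k * (Ssym k k' * cF f k') = ((2 * knorm (k - k') ^ 2 * Qs k (-k') * f k * f k' : ℝ) : ℂ) := by
  rw [Qs_mul]
  have a0 := riesz_mul 0 k
  have a1 := riesz_mul 1 k
  have b0 := riesz_mul 0 k'
  have b1 := riesz_mul 1 k'
  simp only [if_true, one_ne_zero, if_false] at a0 a1 b0 b1
  simp only [cF, Ssym, cross, Prod.fst_sub, Prod.snd_sub]
  push_cast at *
  have hI := Complex.I_sq
  linear_combination (f k * f k' * Complex.I * ((k.2 : ℂ) - k'.2) * knorm k') * a0
    - (f k * f k' * Complex.I * ((k.1 : ℂ) - k'.1) * knorm k') * a1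
    - (f k * f k' * Complex.I * ((k.2 : ℂ) - k'.2) * knorm k) * b0
    + (f k * f k' * Complex.I * ((k.1 : ℂ) - k'.1) * knorm k) * b1
    + (f k * f k' * (((k.1 : ℂ) * knorm k' - k'.1 * knorm k) * ((k.2 : ℂ) - k'.2)
      - ((k.2 : ℂ) * knorm k' - k'.2 * knorm k) * ((k.1 : ℂ) - k'.1))) * hI

lemma abs_fst_le (k : Z2) : |(k.1 : ℝ)| ≤ knorm k := Real.abs_le_sqrt (by nlinarith [sq_nonneg (k.2 : ℝ)])
lemma abs_snd_le (k : Z2) : |(k.2 : ℝ)| ≤ knorm k := Real.abs_le_sqrt (by nlinarith [sq_nonneg (k.1 : ℝ)])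

lemma comm_summable (f : Z2 → ℝ) (hf : Summable fun k => |f k|) (p : Z2 → ℂ) (C : ℝ) (hC : 0 ≤ C)
    (hp : ∀ m, knorm m ^ 2 * ‖p m‖ ≤ C) (j : Fin 2) (k : Z2) (g : Z2 → ℝ) (hg : ∀ m, |g m| ≤ knorm m) :
    Summable fun k' => (rieszSym j k - rieszSym j k') * (Complex.I * (g (k - k') : ℂ) * p (k - k')) * cF f k' := by
  refine Summable.of_norm_bounded (g := fun k' => (2 * ((knorm k + 1) * C)) * |f k'|) (hf.mul_left _) fun k' => ?_
  set m := k - k' with hm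
  have h1 : ‖rieszSym j k - rieszSym j k'‖ ≤ 2 := by
    refine (norm_sub_le _ _).trans ?_
    linarith [norm_riesz_le j k, norm_riesz_le j k']
  have hk := knorm_nonneg k
  have hmn := knorm_nonneg m
  have h2 : knorm k' ≤ knorm k + knorm m := by
    have := knorm_sub_le k m
    have e : k - m = k' := by rw [hm]; abel
    rwa [e] at this
  have h3 : knorm m * ‖p m‖ * knorm k' ≤ (knorm k + 1) * C := by
    have hs : knorm m ≤ knorm m ^ 2 := by
      by_cases h : m = 0
      · rw [h]; simp
      · have := one_le_knorm h; nlinarith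
    have hpm := norm_nonneg (p m)
    calc knorm m * ‖p m‖ * knorm k' ≤ knorm m * ‖p m‖ * (knorm k + knorm m) := by gcongr
      _ = knorm k * (knorm m * ‖p m‖) + knorm m ^ 2 * ‖p m‖ := by ring
      _ ≤ knorm k * (knorm m ^ 2 * ‖p m‖) + knorm m ^ 2 * ‖p m‖ := by gcongr
      _ = (knorm k + 1) * (knorm m ^ 2 * ‖p m‖) := by ring
      _ ≤ _ := by gcongr; exact hp m
  rw [norm_mul, norm_mul, norm_mul, norm_mul, Complex.norm_I, one_mul, cF, Complex.norm_real, Complex.norm_real,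
    Real.norm_eq_abs, Real.norm_eq_abs, abs_mul, abs_of_nonneg (knorm_nonneg k')]
  calc ‖rieszSym j k - rieszSym j k'‖ * (|g m| * ‖p m‖) * (knorm k' * |f k'|)
      ≤ 2 * (knorm m * ‖p m‖) * (knorm k' * |f k'|) := by
        have := knorm_nonneg k'
        gcongr
        exact hg m
    _ = 2 * (knorm m * ‖p m‖ * knorm k') * |f k'| := by ring
    _ ≤ 2 * ((knorm k + 1) * C) * |f k'| := by gcongr

def reidx : Z2 × Z2 ≃ Z2 × Z2 where
  toFun p := (p.2, p.2 - p.1)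
  invFun q := (q.1 - q.2, q.1)
  left_inv p := by ext <;> simp
  right_inv p := by ext <;> simp

lemma weak_sol (ν γ : ℝ) (f : Z2 → ℝ) (h0 : f 0 = 0) (he : ∀ k, f (-k) = f k)
    (hf : Summable fun k => |f k|) (hA : Summable fun k => Real.sqrt (knorm k) * |f k|)
    (heq : ∀ m, ∑' k, Qs k (m - k) * f k * f (m - k) + ν * knorm m ^ (γ - 1) * f m = 0) :
    IsStatWeakSol ν γ (cF f) := by
  intro ψ hψ hp _
  obtain ⟨C, hC, hdec⟩ := fCoeff_decay ψ hψ hp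
  set p := fCoeff ψ with hpdef
  set H : Z2 × Z2 → ℂ := fun q => ((2 * knorm (q.1 - q.2) ^ 2 * Qs q.1 (-q.2) * f q.1 * f q.2 : ℝ) : ℂ)
    * (starRingEnd ℂ) (p (q.1 - q.2)) with hH
  have hHs : Summable H := by
    have := (hA.mul_of_nonneg hA (fun k => by positivity) (fun k => by positivity)).mul_left (2 * C)
    refine Summable.of_norm_bounded this fun q => ?_
    simp only [hH]
    rw [norm_mul, RCLike.norm_conj, Complex.norm_real, Real.norm_eq_abs, abs_mul, abs_mul, abs_mul,
      abs_of_nonneg (by positivity : 0 ≤ 2 * knorm (q.1 - q.2) ^ 2)]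
    have q1 := abs_Qs_le_sqrt q.1 (-q.2)
    rw [knorm_neg] at q1
    have q2 := hdec (q.1 - q.2)
    calc _ = 2 * (knorm (q.1 - q.2) ^ 2 * ‖p (q.1 - q.2)‖) * (|Qs q.1 (-q.2)| * |f q.1| * |f q.2|) := by ring
      _ ≤ 2 * C * ((Real.sqrt (knorm q.1) * Real.sqrt (knorm q.2)) * |f q.1| * |f q.2|) := by gcongr
      _ = _ := by ring
  have hL : ∀ k, ((knorm k ^ (-(1 / 2) : ℝ) : ℝ) : ℂ) * cF f k *
        (starRingEnd ℂ) (((knorm k ^ ((1 / 2) : ℝ) : ℝ) : ℂ) *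
          (-(commCoeff 1 (fun m => Complex.I * ((m.1 : ℝ) : ℂ) * p m) (cF f) k)
            + commCoeff 0 (fun m => Complex.I * ((m.2 : ℝ) : ℂ) * p m) (cF f) k)) = ∑' k', H (k, k') := by
    intro k
    by_cases hk : k = 0
    · subst hk
      simp [cF, hH, h0]
    have hk0 := knorm_pos hk
    have s1 := comm_summable f hf p C hC hdec 1 k (fun m => (m.1 : ℝ)) abs_fst_le
    have s0 := comm_summable f hf p C hC hdec 0 k (fun m => (m.2 : ℝ)) abs_snd_le
    have hcomb : -(commCoeff 1 (fun m => Complex.I * ((m.1 : ℝ) : ℂ) * p m) (cF f) k)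
            + commCoeff 0 (fun m => Complex.I * ((m.2 : ℝ) : ℂ) * p m) (cF f) k
        = ∑' k', Ssym k k' * p (k - k') * cF f k' := by
      unfold commCoeff
      rw [← tsum_neg, ← s1.neg.tsum_add s0]
      refine tsum_congr fun k' => ?_
      simp only [Ssym]; ring
    have hone : ((knorm k ^ (-(1 / 2) : ℝ) : ℝ) : ℂ) * ((knorm k ^ ((1 / 2) : ℝ) : ℝ) : ℂ) = 1 := by
      rw [← Complex.ofReal_mul, ← Real.rpow_add hk0]; simp
    have hconj : (starRingEnd ℂ) (cF f k) = cF f k := Complex.conj_ofReal _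
    rw [hcomb, map_mul, Complex.conj_ofReal]
    calc _ = (((knorm k ^ (-(1 / 2) : ℝ) : ℝ) : ℂ) * ((knorm k ^ ((1 / 2) : ℝ) : ℝ) : ℂ)) *
          (cF f k * (starRingEnd ℂ) (∑' k', Ssym k k' * p (k - k') * cF f k')) := by ring
      _ = (starRingEnd ℂ) (cF f k * ∑' k', Ssym k k' * p (k - k') * cF f k') := by
          rw [hone, one_mul, map_mul, hconj]
      _ = _ := by
          rw [← tsum_mul_left, Complex.conj_tsum]
          refine tsum_congr fun k' => ?_
          have : cF f k * (Ssym k k' * p (k - k') * cF f k')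
              = (cF f k * (Ssym k k' * cF f k')) * p (k - k') := by ring
          rw [this, Ssym_mul, map_mul, Complex.conj_ofReal]
  have hsum : ∑' k, ∑' k', H (k, k') = ∑' m, ∑' k, H (k, k - m) := by
    rw [← hHs.tsum_prod, ← reidx.tsum_eq]
    exact (reidx.summable_iff.2 hHs).tsum_prod
  have hinner : ∀ m, ∑' k, H (k, k - m) = -2 * ν * (((knorm m ^ (-(1 / 2) : ℝ) : ℝ) : ℂ) * cF f m *
        (starRingEnd ℂ) (((knorm m ^ (γ + 1 / 2) : ℝ) : ℂ) * p m)) := by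
    intro m
    have h1 : ∀ k, H (k, k - m) = (2 * knorm m ^ 2 : ℝ) * (starRingEnd ℂ) (p m) *
        ((Qs k (m - k) * f k * f (m - k) : ℝ) : ℂ) := by
      intro k
      have e1 : k - (k - m) = m := by abel
      have e2 : f (k - m) = f (m - k) := by rw [← he]; congr 1; abel
      simp only [hH]
      rw [e1, e2, neg_sub]; push_cast; ring
    simp only [h1]
    rw [tsum_mul_left, ← Complex.ofReal_tsum]
    have h2 : ∑' k, Qs k (m - k) * f k * f (m - k) = -(ν * knorm m ^ (γ - 1) * f m) := by
      linarith [heq m]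
    rw [h2]
    by_cases hm : m = 0
    · subst hm; simp [cF, h0]
    have hm0 := knorm_pos hm
    have h3 : knorm m ^ 2 * knorm m ^ (γ - 1) = knorm m ^ (-(1 / 2) : ℝ) * knorm m * knorm m ^ (γ + 1 / 2) := by
      rw [← Real.rpow_natCast, ← Real.rpow_add hm0]
      nth_rw 3 [← Real.rpow_one (knorm m)]
      rw [← Real.rpow_add hm0, ← Real.rpow_add hm0]; congr 1; push_cast; ring
    have h4 := congrArg (fun x : ℝ => (x : ℂ)) h3
    simp only [cF, map_mul, Complex.conj_ofReal]
    push_cast at h4 ⊢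
    linear_combination (-2 * ν * f m * (starRingEnd ℂ) (p m)) * h4
  simp only [hL]
  rw [hsum]
  simp only [hinner]
  rw [tsum_mul_left]
  ring

/-- Theorem 1.2: for every `ν ≥ 0`, `γ ∈ (0, 3/2)` and
`1/2 ≤ α < 1/2 + min(1/6, 3/2 − γ)`, there exist infinitely many nontrivial stationary weak
solutions `θ` of SQG on `𝕋²` with zero mean and `Λ^{-1}θ ∈ C^α(𝕋²)`.  Solutions are encoded
by their Fourier coefficients `c = θ̂`; `Λ^{-1}θ ∈ C^α` is witnessed by a Hölder continuous
periodic function `f` with `f̂(k) = c(k)/|k|`. -/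
theorem stmt0 (ν γ α : ℝ) (hν : 0 ≤ ν) (hγ1 : 0 < γ) (hγ2 : γ < 3 / 2)
    (hα1 : 1 / 2 ≤ α) (hα2 : α < 1 / 2 + min (1 / 6) (3 / 2 - γ)) :
    {c : Z2 → ℂ |
      c ≠ 0 ∧ c 0 = 0 ∧ (∀ k : Z2, c (-k) = (starRingEnd ℂ) (c k)) ∧
      Summable (fun k : Z2 => (knorm k)⁻¹ * ‖c k‖ ^ 2) ∧
      IsStatWeakSol ν γ c ∧
      (∃ f : ℝ × ℝ → ℂ, Continuous f ∧ Periodic2 f ∧ RealValued f ∧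
        (∃ Cf : ℝ, ∀ x y : ℝ × ℝ, ‖f x - f y‖ ≤ Cf * dist x y ^ α) ∧
        (∀ k : Z2, fCoeff f k = if k = 0 then 0 else c k / ((knorm k : ℝ) : ℂ)))}.Infinite := by
  classical
  have hα3 : α ≤ 1 := by
    have := min_le_left (1 / 6 : ℝ) (3 / 2 - γ)
    linarith
  intro hfin
  have hex : ∃ M : ℝ, 1 ≤ M ∧ ∀ c ∈ hfin.toFinset, ∃ k, c k ≠ 0 ∧ 2 * knorm k < M := by
    have h1 : ∀ c ∈ hfin.toFinset, ∃ k, c k ≠ 0 := fun c hc =>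
      Function.ne_iff.1 ((hfin.mem_toFinset.1 hc).1)
    choose! κ hκ using h1
    refine ⟨1 + ∑ c ∈ hfin.toFinset, 2 * knorm (κ c), ?_, fun c hc => ⟨κ c, hκ c hc, ?_⟩⟩
    · have : 0 ≤ ∑ c ∈ hfin.toFinset, 2 * knorm (κ c) :=
        Finset.sum_nonneg fun c _ => mul_nonneg (by norm_num) (knorm_nonneg _)
      linarith
    · have := Finset.single_le_sum (f := fun c => 2 * knorm (κ c))
        (fun c _ => mul_nonneg (by norm_num) (knorm_nonneg (κ c))) hc
      linarith
  obtain ⟨M, hM1, hM⟩ := hex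
  obtain ⟨f, k0, hk0, he, hlow, hs, heq⟩ := exists_limit ν γ α hν hγ1 hγ2 hα1 hα2 M
  have h0 : f 0 = 0 := hlow 0 (by rw [knorm_zero]; linarith)
  have hA : Summable fun k => Real.sqrt (knorm k) * |f k| :=
    Summable.of_nonneg_of_le (fun k => by positivity)
      (fun k => mul_le_mul_of_nonneg_right (sqrt_knorm_le α hα1 k) (abs_nonneg _)) hs
  have hf : Summable fun k => |f k| := by
    refine Summable.of_nonneg_of_le (fun k => abs_nonneg _) (fun k => ?_) hA
    by_cases hk : k = 0
    · subst hk; simp [h0]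
    · have : 1 ≤ Real.sqrt (knorm k) := Real.one_le_sqrt.2 (one_le_knorm hk)
      nlinarith [abs_nonneg (f k)]
  have hk0' : k0 ≠ 0 := fun h => hk0 (h ▸ h0)
  have hmem : cF f ∈ hfin.toFinset := by
    rw [hfin.mem_toFinset]
    refine ⟨?_, ?_, ?_, ?_, weak_sol ν γ f h0 he hf hA heq, gF f, continuous_gF f hf, periodic_gF f,
      real_gF f he, ⟨_, holder_gF f hf α (by linarith) hα3 hs⟩, ?_⟩
    · intro h
      have := congrFun h k0
      simp [cF, hk0, (knorm_pos hk0').ne'] at this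
    · simp [cF]
    · intro k; simp [cF, he]
    · have hsq : Summable fun k => (Real.sqrt (knorm k) * |f k|) * (Real.sqrt (knorm k) * |f k|) := by
        refine Summable.of_nonneg_of_le (fun k => by positivity) (fun k => ?_)
          (hA.mul_right (∑' k, Real.sqrt (knorm k) * |f k|))
        exact mul_le_mul_of_nonneg_left (hA.le_tsum k (fun j _ => by positivity)) (by positivity)
      refine hsq.congr fun k => ?_
      rw [cF, Complex.norm_real, Real.norm_eq_abs, sq_abs]
      have e1 : Real.sqrt (knorm k) * |f k| * (Real.sqrt (knorm k) * |f k|)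
          = (Real.sqrt (knorm k) * Real.sqrt (knorm k)) * (|f k| * |f k|) := by ring
      rw [e1, Real.mul_self_sqrt (knorm_nonneg k), abs_mul_abs_self]
      by_cases hk : k = 0
      · subst hk; simp [h0]
      · have := (knorm_pos hk).ne'
        field_simp
    · intro k
      rw [fCoeff_gF f hf]
      split_ifs with hk
      · rw [hk, h0]; simp
      · have : (knorm k : ℂ) ≠ 0 := by exact_mod_cast (knorm_pos hk).ne'
        rw [cF]; push_cast; field_simp
  obtain ⟨k, hk, hkM⟩ := hM _ hmem
  exact hk (by simp [cF, hlow k hkM])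

end
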